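/- Let U be a shifted order ideal of monomials of degree at most (d+1)/2 on [m], m = n−d−1, and work in characteristic 0. Then U(S_d(U)) = {u ∈ U : deg u ≤ d/2}, where U(Γ) = {monomials u in x_1,…,x_{n−d−1} : u ∉ Gin(I_Γ)}. -/

import Mathlib

/-! Combinatorics of simplicial complexes on subsets of ℕ (vertex set `[n] = Finset.Icc 1 n`). -/

/-- `Γ` is a simplicial complex on the vertex set `V`. -/
def SimplicialComplexOn (V : Finset ℕ) (Γ : Set (Finset ℕ)) : Prop :=
  (∀ F ∈ Γ, F ⊆ V) ∧ (∀ v ∈ V, ({v} : Finset ℕ) ∈ Γ) ∧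
    (∀ F ∈ Γ, ∀ G, G ⊆ F → G ∈ Γ)

/-- The dimension of a simplicial complex, as an integer (`dim Γ = max {|F| - 1 : F ∈ Γ}`). -/
noncomputable def sdim (Γ : Set (Finset ℕ)) : ℤ :=
  sSup ((fun F : Finset ℕ => (F.card : ℤ) - 1) '' Γ)

/-- A facet of `Γ` is a maximal face. -/
def IsFacet (Γ : Set (Finset ℕ)) (F : Finset ℕ) : Prop :=
  F ∈ Γ ∧ ∀ G ∈ Γ, F ⊆ G → F = G

/-- A complex is pure if all of its facets have the same cardinality. -/
def PureComplex (Γ : Set (Finset ℕ)) : Prop :=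
  ∀ F G, IsFacet Γ F → IsFacet Γ G → F.card = G.card

/-- `fvec Γ k` is the number of faces of `Γ` of cardinality `k`, i.e. `f_{k-1}(Γ)`. -/
noncomputable def fvec (Γ : Set (Finset ℕ)) (k : ℕ) : ℕ :=
  {F ∈ Γ | F.card = k}.ncard

/-- The `h`-vector of a `(d-1)`-dimensional complex:
`h_i = ∑_{j=0}^i (-1)^{i-j} binom(d-j, d-i) f_{j-1}`. -/
noncomputable def hvec (d : ℕ) (Γ : Set (Finset ℕ)) (i : ℕ) : ℤ :=
  ∑ j ∈ Finset.range (i + 1),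
    (-1 : ℤ) ^ (i - j) * (Nat.choose (d - j) (d - i) : ℤ) * (fvec Γ j : ℤ)

/-- The link of `Γ` with respect to a face `F`. -/
def linkOf (Γ : Set (Finset ℕ)) (F : Finset ℕ) : Set (Finset ℕ) :=
  {G | Disjoint G F ∧ G ∪ F ∈ Γ}

/-- The contraction of `Γ` with respect to `{i,j}`, identifying vertex `i` with `j`. -/
def contraction (Γ : Set (Finset ℕ)) (i j : ℕ) : Set (Finset ℕ) :=
  {F | F ∈ Γ ∧ i ∉ F} ∪ {G | ∃ F ∈ Γ, i ∈ F ∧ G = F.erase i ∪ {j}}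

/-- The Link condition: `lk_Γ({i}) ∩ lk_Γ({j}) = lk_Γ({i,j})`. -/
def LinkCondition (Γ : Set (Finset ℕ)) (i j : ℕ) : Prop :=
  linkOf Γ {i} ∩ linkOf Γ {j} = linkOf Γ {i, j}

open Classical in
/-- The shift operator `C_{ij}` on faces. -/
noncomputable def shiftMap (Γ : Set (Finset ℕ)) (i j : ℕ) (F : Finset ℕ) : Finset ℕ :=
  if i ∈ F ∧ j ∉ F ∧ F.erase i ∪ {j} ∉ Γ then F.erase i ∪ {j} else F

/-- `Shift_{ij}(Γ) = {C_{ij}(F) : F ∈ Γ}`. -/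
noncomputable def shiftComplex (Γ : Set (Finset ℕ)) (i j : ℕ) : Set (Finset ℕ) :=
  (shiftMap Γ i j) '' Γ

/-- The join `W * Σ = {F ∪ G : F ⊆ W, G ∈ Σ}` of a vertex set with a complex. -/
def joinW (W : Finset ℕ) (C : Set (Finset ℕ)) : Set (Finset ℕ) :=
  {H | ∃ F ⊆ W, ∃ G ∈ C, H = F ∪ G}

/-- Strong edge decomposability: boundaries of simplices and `{∅}` are strongly edge
decomposable, and recursively, a pure complex satisfying the Link condition w.r.t. an edge
`{i,j}` whose contraction and link are strongly edge decomposable is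
strongly edge decomposable. -/
inductive StronglyEdgeDecomposable : Set (Finset ℕ) → Prop
  | trivialComplex : StronglyEdgeDecomposable {(∅ : Finset ℕ)}
  | simplexBoundary (V : Finset ℕ) (hV : V.Nonempty) :
      StronglyEdgeDecomposable {F | F ⊆ V ∧ F ≠ V}
  | contract (Γ : Set (Finset ℕ)) (i j : ℕ) (hij : i < j)
      (hpure : PureComplex Γ) (hedge : ({i, j} : Finset ℕ) ∈ Γ)
      (hlc : LinkCondition Γ i j)
      (hcon : StronglyEdgeDecomposable (contraction Γ i j))
      (hlk : StronglyEdgeDecomposable (linkOf Γ {i, j})) :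
      StronglyEdgeDecomposable Γ

/-- A shifted complex: `F ∈ Γ`, `i ∈ F`, `i < j`, `j ∈ V` imply `(F \ {i}) ∪ {j} ∈ Γ`. -/
def ShiftedComplex (V : Finset ℕ) (Γ : Set (Finset ℕ)) : Prop :=
  ∀ F ∈ Γ, ∀ i ∈ F, ∀ j, i < j → j ∈ V → insert j (F.erase i) ∈ Γ

/-- A `d`-subset `F ⊆ [n]` is admissible if `n - k ∉ F` implies `[n-d+k, n-k-1] ⊆ F`. -/
def Admissible (n d : ℕ) (F : Finset ℕ) : Prop :=
  F ⊆ Finset.Icc 1 n ∧ F.card = d ∧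
    ∀ k < n, (n - k) ∉ F → Finset.Icc (n - d + k) (n - k - 1) ⊆ F

/-- `Δ(n,d)`, the complex generated by all admissible `d`-subsets of `[n]`; by a theorem of
Kalai this is the symmetric algebraic shifted complex `Δˢ(C(n,d))` of the boundary complex of
the cyclic `d`-polytope with `n` vertices. -/
def DeltaC (n d : ℕ) : Set (Finset ℕ) :=
  if d = 0 then {(∅ : Finset ℕ)} else {G | ∃ F, Admissible n d F ∧ G ⊆ F}

/-- The increasing enumeration of `V`, as a map `{1, …, |V|} → V ⊆ ℕ` (identity elsewhere). -/
noncomputable def vlabel (V : Finset ℕ) (i : ℕ) : ℕ :=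
  if h : i - 1 < V.card then (((V.orderIsoOfFin rfl) ⟨i - 1, h⟩ : V) : ℕ) else i

/-- `Δ(V,d)`: the complex `Δ(|V|,d)` relabeled order-isomorphically onto the vertex set `V`. -/
noncomputable def DeltaV (V : Finset ℕ) (d : ℕ) : Set (Finset ℕ) :=
  (fun G : Finset ℕ => G.image (vlabel V)) '' DeltaC V.card d
/-! Squeezed balls and spheres (Kalai). Monomials on `[m]` are represented as multisets. -/

/-- `U` is a shifted order ideal of monomials on `[m]`: it contains `1` and all variables
`x_1,…,x_m`, is closed under divisibility, and `u·x_i ∈ U`, `i < j ≤ m` imply `u·x_j ∈ U`.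
(A monomial is encoded as the multiset of its variable indices.) -/
def IsShiftedOrderIdeal (m : ℕ) (U : Set (Multiset ℕ)) : Prop :=
  (∀ u ∈ U, ∀ i ∈ u, i ∈ Finset.Icc 1 m) ∧ (0 : Multiset ℕ) ∈ U ∧
    (∀ i ∈ Finset.Icc 1 m, ({i} : Multiset ℕ) ∈ U) ∧
    (∀ u ∈ U, ∀ v, v ≤ u → v ∈ U) ∧
    (∀ u : Multiset ℕ, ∀ i j : ℕ, i < j → j ≤ m → (i ::ₘ u) ∈ U → (j ::ₘ u) ∈ U)

/-- For a monomial `u = x_{i_1}⋯x_{i_k}` (`i_1 ≤ … ≤ i_k`), the `(d+1)`-set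
`F_d(u) = {i_1, i_1+1} ∪ {i_2+2, i_2+3} ∪ ⋯ ∪ {i_k+2(k-1), i_k+2k-1} ∪ [n+2k-d, n]`. -/
noncomputable def Fd (n d : ℕ) (u : Multiset ℕ) : Finset ℕ :=
  (Finset.range (Multiset.card u)).biUnion
      (fun j => {(u.sort (· ≤ ·)).getD j 0 + 2 * j, (u.sort (· ≤ ·)).getD j 0 + 2 * j + 1}) ∪
    Finset.Icc (n + 2 * Multiset.card u - d) n

/-- The squeezed `d`-ball `B_d(U)`: the complex generated by `{F_d(u) : u ∈ U}`. -/
def squeezedBall (n d : ℕ) (U : Set (Multiset ℕ)) : Set (Finset ℕ) :=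
  {G | ∃ u ∈ U, G ⊆ Fd n d u}

/-- The boundary of a pure `d`-dimensional complex `B`: the subcomplex generated by the
`(d-1)`-dimensional faces (cardinality-`d` faces) contained in exactly one facet. -/
noncomputable def complexBoundary (d : ℕ) (B : Set (Finset ℕ)) : Set (Finset ℕ) :=
  {F | ∃ G, F ⊆ G ∧ G ∈ B ∧ G.card = d ∧
    {H | H ∈ B ∧ H.card = d + 1 ∧ G ⊆ H}.ncard = 1}

/-- The squeezed `(d-1)`-sphere `S_d(U) = ∂ B_d(U)`. -/
noncomputable def squeezedSphere (n d : ℕ) (U : Set (Multiset ℕ)) : Set (Finset ℕ) :=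
  complexBoundary d (squeezedBall n d U)

/-! The Stanley–Reisner ideal, the degree reverse lexicographic order, initial ideals and
generic initial ideals in the polynomial ring `K[x_1,…,x_n]`, realized as
`MvPolynomial (Fin n) K` with the variable `x_i` being `X ⟨i-1⟩`. -/

/-- The squarefree monomial `x_F = ∏_{i ∈ F} x_i` (variable `x_i`, `1 ≤ i ≤ n`, is `X ⟨i-1⟩`). -/
noncomputable def faceMonomial (K : Type*) [CommRing K] (n : ℕ) (F : Finset ℕ) :
    MvPolynomial (Fin n) K :=
  ∏ a ∈ Finset.univ.filter (fun a : Fin n => (a : ℕ) + 1 ∈ F), MvPolynomial.X a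

/-- The Stanley–Reisner ideal of a complex `Γ` on `[n]`, generated by the squarefree
monomials `x_F` with `F ⊆ [n]`, `F ∉ Γ`. -/
noncomputable def srIdeal (K : Type*) [CommRing K] (n : ℕ) (Γ : Set (Finset ℕ)) :
    Ideal (MvPolynomial (Fin n) K) :=
  Ideal.span {f | ∃ F : Finset ℕ, F ⊆ Finset.Icc 1 n ∧ F ∉ Γ ∧ f = faceMonomial K n F}

/-- The degree reverse lexicographic order (induced by `x_1 > x_2 > ⋯`, smaller index =
bigger variable): `u < v` iff `deg u < deg v`, or degrees agree and at the largest index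
where `u, v` differ, `u` has the larger exponent. -/
def DegRevLexLT {σ : Type*} [LinearOrder σ] (u v : σ →₀ ℕ) : Prop :=
  (u.sum fun _ e => e) < (v.sum fun _ e => e) ∨
    ((u.sum fun _ e => e) = (v.sum fun _ e => e) ∧
      ∃ k, v k < u k ∧ ∀ l, k < l → u l = v l)

/-- The initial ideal of `I` w.r.t. the degree reverse lexicographic order: the ideal
spanned by the leading monomials of the elements of `I`. -/
noncomputable def initialIdeal {σ : Type*} [LinearOrder σ] {K : Type*} [Field K]
    (I : Ideal (MvPolynomial σ K)) : Ideal (MvPolynomial σ K) :=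
  Ideal.span {m | ∃ f ∈ I, ∃ u ∈ f.support, m = MvPolynomial.monomial u (1 : K) ∧
    ∀ v ∈ f.support, v ≠ u → DegRevLexLT v u}

/-- The linear change of coordinates of `K[x_1,…,x_n]` associated with a matrix `M`,
`x_j ↦ ∑_i M_{ij} x_i`. -/
noncomputable def genLin {K : Type*} [CommRing K] {n : ℕ} (M : Matrix (Fin n) (Fin n) K) :
    MvPolynomial (Fin n) K →ₐ[K] MvPolynomial (Fin n) K :=
  MvPolynomial.aeval (fun j => ∑ a : Fin n, MvPolynomial.C (M a j) * MvPolynomial.X a)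

/-- `J` is the generic initial ideal (w.r.t. degrevlex) of `I`: there is a nonempty Zariski
open subset `U ⊆ GL_n(K)` (the nonvanishing locus of a nonzero polynomial in the matrix
entries) such that `in(φ(I)) = J` for every `φ ∈ U`. -/
def IsGin {K : Type*} [Field K] {n : ℕ} (I J : Ideal (MvPolynomial (Fin n) K)) : Prop :=
  ∃ p : MvPolynomial (Fin n × Fin n) K, p ≠ 0 ∧
    ∀ M : Matrix (Fin n) (Fin n) K, IsUnit M.det →
      MvPolynomial.eval (fun q => M q.1 q.2) p ≠ 0 →
      initialIdeal (Ideal.map (genLin M) I) = J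

/-- The set `G(J)` of (exponent vectors of) minimal monomial generators of a monomial
ideal `J`. -/
def minimalMonomialGens {σ : Type*} {K : Type*} [Field K] (J : Ideal (MvPolynomial σ K)) :
    Set (σ →₀ ℕ) :=
  {u | MvPolynomial.monomial u (1 : K) ∈ J ∧
    ∀ v : σ →₀ ℕ, v ≤ u → MvPolynomial.monomial v (1 : K) ∈ J → v = u}

/-- The squarefree operation `Φ` on exponent vectors:
`x_{i_1} x_{i_2} ⋯ x_{i_k} ↦ {i_1, i_2+1, …, i_k+k-1}` (`i_1 ≤ i_2 ≤ ⋯ ≤ i_k`). -/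
noncomputable def sqfreeOp {n : ℕ} (u : Fin n →₀ ℕ) : Finset ℕ :=
  (List.zipWith (· + ·)
      ((u.toMultiset.map (fun a : Fin n => (a : ℕ) + 1)).sort (· ≤ ·))
      (List.range (Multiset.card (u.toMultiset)))).toFinset

/-- `Δs` is the symmetric algebraic shifted complex of `Γ`: its Stanley–Reisner ideal is
`Φ(Gin(I_Γ))`, i.e. `Δs` consists of the `F ⊆ [n]` containing no `Φ(u)`, `u ∈ G(Gin(I_Γ))`. -/
def IsSymmetricShift (K : Type*) [Field K] (n : ℕ) (Γ Δs : Set (Finset ℕ)) : Prop :=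
  ∃ J : Ideal (MvPolynomial (Fin n) K), IsGin (srIdeal K n Γ) J ∧
    Δs = {F | F ⊆ Finset.Icc 1 n ∧ ∀ u ∈ minimalMonomialGens J, ¬ sqfreeOp u ⊆ F}

/-- The exponent vector (in `K[x_1,…,x_n]`) of a monomial given as a multiset. -/
noncomputable def multisetToExp (n : ℕ) (u : Multiset ℕ) : Fin n →₀ ℕ :=
  Finsupp.equivFunOnFinite.symm (fun a : Fin n => u.count ((a : ℕ) + 1))
/-! The exterior algebra `E = ⋀⟨e_1, e_2, …⟩` over `K`, exterior face ideals, the reverse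
lexicographic order, initial ideals and exterior algebraic shifting. We realize `E` as the
exterior algebra of the `K`-module `ℕ → K`, with `e_i` the image of `Pi.single i 1`. -/

/-- The exterior algebra `⋀ (ℕ → K)` hosting all the exterior face ideals. -/
abbrev ExtAlg (K : Type*) [Field K] := ExteriorAlgebra K (ℕ → K)

/-- The exterior monomial `e_F = e_{i_1} ∧ ⋯ ∧ e_{i_k}` for `F = {i_1 < ⋯ < i_k}`. -/
noncomputable def eMon (K : Type*) [Field K] (F : Finset ℕ) : ExtAlg K :=
  ((F.sort (· ≤ ·)).map (fun i => ExteriorAlgebra.ι K (Pi.single i (1 : K)))).prod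

/-- The exterior face ideal `J_Γ` of a complex `Γ` on the vertex set `V`, generated by the
monomials `e_F` with `F ⊆ V`, `F ∉ Γ`. -/
noncomputable def extFaceIdeal (K : Type*) [Field K] (V : Finset ℕ) (Γ : Set (Finset ℕ)) :
    Ideal (ExtAlg K) :=
  Ideal.span {x | ∃ F : Finset ℕ, F ⊆ V ∧ F ∉ Γ ∧ x = eMon K F}

/-- The alternating form computing the determinant of the coordinates indexed by `F`. -/
noncomputable def detCoeffAlt (K : Type*) [Field K] (F : Finset ℕ) :
    (ℕ → K) [⋀^Fin F.card]→ₗ[K] K :=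
  (Matrix.detRowAlternating).compLinearMap
    (LinearMap.funLeft K K (fun b : Fin F.card => ((F.orderIsoOfFin rfl b : F) : ℕ)))

/-- The coefficient functional of the basis monomial `e_F`: the linear functional on the
exterior algebra giving the coefficient of `e_F` in the monomial basis expansion. -/
noncomputable def extCoeff (K : Type*) [Field K] (F : Finset ℕ) : ExtAlg K →ₗ[K] K :=
  ExteriorAlgebra.liftAlternating
    (fun i => if h : i = F.card then (detCoeffAlt K F).domDomCongr (finCongr h.symm) else 0)

/-- The reverse lexicographic order (induced by `1 > 2 > ⋯`) on exterior monomials: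
`F < G` iff `|F| < |G|`, or the cardinalities agree and the largest element of the
symmetric difference `F Δ G` belongs to `F`. -/
def RevLexLT (F G : Finset ℕ) : Prop :=
  F.card < G.card ∨ (F.card = G.card ∧
    ∃ k, k ∈ F ∧ k ∉ G ∧ ∀ l, k < l → (l ∈ F ↔ l ∈ G))

/-- The initial ideal of an ideal `I` of the exterior algebra w.r.t. the reverse
lexicographic order: spanned by the leading monomials `e_F` of the elements of `I`. -/
noncomputable def extInitialIdeal (K : Type*) [Field K] (I : Ideal (ExtAlg K)) :
    Ideal (ExtAlg K) :=
  Ideal.span {x | ∃ y ∈ I, ∃ F : Finset ℕ, x = eMon K F ∧ extCoeff K F y ≠ 0 ∧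
    ∀ G : Finset ℕ, extCoeff K G y ≠ 0 → G ≠ F → RevLexLT G F}

/-- The linear change of coordinates of `span{e_i : i ∈ V}` (identity elsewhere)
associated with a `|V| × |V|` matrix `M`. -/
noncomputable def extLinMap (K : Type*) [Field K] (V : Finset ℕ)
    (M : Matrix (Fin V.card) (Fin V.card) K) : (ℕ → K) →ₗ[K] (ℕ → K) where
  toFun v k :=
    if h : k ∈ V then
      ∑ a : Fin V.card,
        M ((V.orderIsoOfFin rfl).symm ⟨k, h⟩) a * v ((V.orderIsoOfFin rfl a : V) : ℕ)
    else v k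
  map_add' x y := by
    funext k
    by_cases h : k ∈ V <;> simp [h, mul_add, Finset.sum_add_distrib]
  map_smul' c x := by
    funext k
    by_cases h : k ∈ V <;> simp [h, Finset.mul_sum, mul_left_comm]

/-- The algebra automorphism of the exterior algebra induced by `extLinMap`. -/
noncomputable def extAlgMap (K : Type*) [Field K] (V : Finset ℕ)
    (M : Matrix (Fin V.card) (Fin V.card) K) : ExtAlg K →ₐ[K] ExtAlg K :=
  ExteriorAlgebra.lift K ⟨(ExteriorAlgebra.ι K).comp (extLinMap K V M),
    fun _ => ExteriorAlgebra.ι_sq_zero _⟩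

/-- `Δe` is the exterior algebraic shifted complex of `Γ` (as complexes on the vertex set
`V`): `J_{Δe} = Gin(J_Γ)`, where the generic initial ideal is witnessed by a nonempty
Zariski open subset of `GL(V)` (the nonvanishing locus of a nonzero polynomial in the
matrix entries). -/
def IsExteriorShift (K : Type*) [Field K] (V : Finset ℕ) (Γ Δe : Set (Finset ℕ)) : Prop :=
  ∃ p : MvPolynomial (Fin V.card × Fin V.card) K, p ≠ 0 ∧
    ∀ M : Matrix (Fin V.card) (Fin V.card) K, IsUnit M.det →
      MvPolynomial.eval (fun q => M q.1 q.2) p ≠ 0 →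
      extInitialIdeal K (Ideal.map (extAlgMap K V M) (extFaceIdeal K V Γ)) =
        extFaceIdeal K V Δe

/-- The simplicial complex on `V` whose exterior face ideal is the (monomial) ideal `J`. -/
noncomputable def complexOfExtIdeal (K : Type*) [Field K] (V : Finset ℕ)
    (J : Ideal (ExtAlg K)) : Set (Finset ℕ) :=
  {F | F ⊆ V ∧ eMon K F ∉ J}

/-- Nongeneric exterior shifting `Δ_φ(Γ)`, defined by `J_{Δ_φ(Γ)} = in(φ(J_Γ))` for an
individual linear change of coordinates `φ` given by the matrix `M`. -/
noncomputable def DeltaPhi (K : Type*) [Field K] (V : Finset ℕ)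
    (M : Matrix (Fin V.card) (Fin V.card) K) (Γ : Set (Finset ℕ)) : Set (Finset ℕ) :=
  complexOfExtIdeal K V (extInitialIdeal K (Ideal.map (extAlgMap K V M) (extFaceIdeal K V Γ)))

/-- The shifting-theoretic upper bound relation for a `(d-1)`-dimensional complex `Γ` on the
vertex set `V`: `Δᵉ(Γ) ⊆ Δ(V,d)`. -/
def ShiftingUBR (K : Type*) [Field K] (V : Finset ℕ) (d : ℕ) (Γ : Set (Finset ℕ)) : Prop :=
  ∀ Δe, IsExteriorShift K V Γ Δe → Δe ⊆ DeltaV V d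
/-! Graded pieces, linear systems of parameters, the Cohen–Macaulay property and the strong
Lefschetz property for graded quotients `A = K[x_1,…,x_n]/I`. -/

/-- The degree-`k` homogeneous component of the graded quotient `S/I` (the image of the
degree-`k` homogeneous polynomials). -/
noncomputable def quotPiece {K : Type*} [Field K] {n : ℕ}
    (I : Ideal (MvPolynomial (Fin n) K)) (k : ℕ) :
    Submodule K (MvPolynomial (Fin n) K ⧸ I) :=
  (MvPolynomial.homogeneousSubmodule (Fin n) K k).map (Ideal.Quotient.mkₐ K I).toLinearMap

/-- `θ_1, …, θ_d` is a linear system of parameters of `S/I`: the `θ_a` are linear forms and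
the quotient `S/(I + (θ_1,…,θ_d))` has Krull dimension `≤ 0`. -/
def IsLSOP {K : Type*} [Field K] {n : ℕ} (I : Ideal (MvPolynomial (Fin n) K)) (d : ℕ)
    (θ : Fin d → MvPolynomial (Fin n) K) : Prop :=
  (∀ a, (θ a).IsHomogeneous 1) ∧
    ringKrullDim (MvPolynomial (Fin n) K ⧸ (I ⊔ Ideal.span (Set.range θ))) ≤ 0

set_option synthInstance.maxHeartbeats 1000000 in
/-- The graded quotient `A = S/I` is Cohen–Macaulay: a linear system of parameters of
length `d = dim A` forms a regular `A`-sequence. -/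
def IsCMIdeal {K : Type*} [Field K] {n : ℕ} (I : Ideal (MvPolynomial (Fin n) K)) : Prop :=
  ∃ d : ℕ, ringKrullDim (MvPolynomial (Fin n) K ⧸ I) = d ∧
    ∃ θ : Fin d → MvPolynomial (Fin n) K, IsLSOP I d θ ∧
      RingTheory.Sequence.IsRegular (MvPolynomial (Fin n) K ⧸ I)
        ((List.ofFn θ).map (⇑(Ideal.Quotient.mk I)))

/-- The graded quotient `A = S/I` has the strong Lefschetz property: `A` is Cohen–Macaulay
and there are an l.s.o.p. `θ_1, …, θ_d` (`d = dim A`) and a linear form `ω` such that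
`ω^{s-2i} : (A/θA)_i → (A/θA)_{s-i}` is bijective for `0 ≤ i ≤ s/2`, where
`s = max{k : (A/θA)_k ≠ 0}`. -/
def HasSLPIdeal {K : Type*} [Field K] {n : ℕ} (I : Ideal (MvPolynomial (Fin n) K)) : Prop :=
  IsCMIdeal I ∧
    ∃ d : ℕ, ringKrullDim (MvPolynomial (Fin n) K ⧸ I) = d ∧
      ∃ θ : Fin d → MvPolynomial (Fin n) K, IsLSOP I d θ ∧
        ∃ ω : MvPolynomial (Fin n) K, ω.IsHomogeneous 1 ∧
          ∃ s : ℕ,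
            (quotPiece (I ⊔ Ideal.span (Set.range θ)) s ≠ ⊥ ∧
              ∀ k, s < k → quotPiece (I ⊔ Ideal.span (Set.range θ)) k = ⊥) ∧
            ∀ i : ℕ, 2 * i ≤ s →
              Set.BijOn
                (fun x => (Ideal.Quotient.mk (I ⊔ Ideal.span (Set.range θ)) ω) ^ (s - 2 * i) * x)
                (quotPiece (I ⊔ Ideal.span (Set.range θ)) i)
                (quotPiece (I ⊔ Ideal.span (Set.range θ)) (s - i))

/-- A simplicial complex is Cohen–Macaulay over `K` if its Stanley–Reisner ring is. -/
def ComplexCM (K : Type*) [Field K] (n : ℕ) (Γ : Set (Finset ℕ)) : Prop :=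
  IsCMIdeal (srIdeal K n Γ)

/-- A `(d-1)`-dimensional complex `Γ` has the strong Lefschetz property if `h_d(Γ) > 0` and
its Stanley–Reisner ring has the strong Lefschetz property. -/
def ComplexSLP (K : Type*) [Field K] (n d : ℕ) (Γ : Set (Finset ℕ)) : Prop :=
  0 < hvec d Γ d ∧ HasSLPIdeal (srIdeal K n Γ)

/-- A `1`-dimensional simplicial sphere (a cycle): a complex all of whose faces are edges or
smaller, every vertex lying in exactly two edges, whose edge graph is connected. -/
def IsCycleComplex (V : Finset ℕ) (Γ : Set (Finset ℕ)) : Prop :=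
  SimplicialComplexOn V Γ ∧ (∀ F ∈ Γ, F.card ≤ 2) ∧
    (∀ v ∈ V, {e | e ∈ Γ ∧ e.card = 2 ∧ v ∈ e}.ncard = 2) ∧
    ∀ u ∈ V, ∀ v ∈ V,
      Relation.ReflTransGen (fun a b : ℕ => ({a, b} : Finset ℕ) ∈ Γ) u v

/-! Write `n = m + d + 1`, so that all monomials of interest are in `x_1, …, x_m`. For such a
monomial `v = x_{i_1} ⋯ x_{i_k}` with `i_1 ≤ ⋯ ≤ i_k` let
`σ(v) = x_{i_1} x_{i_2 + 2} ⋯ x_{i_k + 2(k-1)}`. A facet of `B_d(U)` containing the support of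
`σ(v)` forces `v ∈ U`, so the monomials `σ(v)`, `v ∉ U`, lie in the Stanley–Reisner ideal of the
ball. More precisely, in each degree at most `⌊d/2⌋ + 1` that ideal has at most as many monomials as
there are monomials in `x_1, …, x_n` whose part in `x_1, …, x_m` is outside `U`.

In generic coordinates the monomials `σ(v)` become products of linear forms whose coefficients at
the monomials in `x_1, …, x_m` are independent. In the reverse lexicographic order these are the
largest monomials, so in degrees at most `⌊d/2⌋ + 1` each `v ∉ U` is a leading monomial of the ideal
of the ball, and by the count of its dimension no `v ∈ U` is.

The sphere has the same faces of cardinality at most `⌊d/2⌋` as the ball, which settles the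
degrees up to `⌊d/2⌋`. In degree `k = ⌊d/2⌋ + 1` the monomials
`x_{i_1 + 1} x_{i_2 + 3} ⋯ x_{i_k + 2k - 1}`, for `u = x_{i_1} ⋯ x_{i_k} ∈ U`, also lie in the
Stanley–Reisner ideal of the sphere. Together with the `σ(v)`, `v ∉ U`, they have independent
coefficients in generic coordinates, so every monomial of that degree in `x_1, …, x_m` is a leading
monomial, and hence so is every one of higher degree.
-/

namespace SqueezedSphere

/-! ### Monomials as multisets of indices -/

section Multisets

theorem multiset_induction_on_max {p : Multiset ℕ → Prop} (zero : p 0)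
    (cons : ∀ b w, (∀ x ∈ w, x ≤ b) → p w → p (b ::ₘ w)) (w : Multiset ℕ) : p w := by
  induction w using Multiset.strongInductionOn with
  | _ w ih =>
    rcases eq_or_ne w 0 with rfl | hw
    · exact zero
    · obtain ⟨b, hb, hmax⟩ := w.toFinset.exists_max_image id (Multiset.toFinset_nonempty.2 hw)
      rw [Multiset.mem_toFinset] at hb
      rw [← Multiset.cons_erase hb]
      exact cons b _ (fun x hx => hmax x (Multiset.mem_toFinset.2 (Multiset.mem_of_mem_erase hx)))
        (ih _ (Multiset.erase_lt.2 hb))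

theorem sort_cons_of_forall_le {j : ℕ} {u : Multiset ℕ} (hj : ∀ x ∈ u, x ≤ j) :
    (j ::ₘ u).sort (· ≤ ·) = u.sort (· ≤ ·) ++ [j] := by
  refine List.Perm.eq_of_pairwise (le := (· ≤ ·)) (fun _ _ _ _ => le_antisymm)
    (Multiset.pairwise_sort _ _) ?_ ?_
  · rw [List.pairwise_append]
    refine ⟨Multiset.pairwise_sort _ _, List.pairwise_singleton _ _, fun a ha b hb => ?_⟩
    rw [List.mem_singleton.1 hb]
    exact hj a ((Multiset.mem_sort _).1 ha)
  · rw [← Multiset.coe_eq_coe, Multiset.sort_eq, ← Multiset.coe_add, Multiset.sort_eq,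
      Multiset.coe_singleton, add_comm, Multiset.singleton_add]

theorem getD_le_iff_lt_countP {D c : ℕ} (hc : c < D) {l : List ℕ} (hl : l.Pairwise (· ≤ ·))
    (t : ℕ) : l.getD t D ≤ c ↔ t < l.countP (· ≤ c) := by
  induction l generalizing t with
  | nil => simpa using hc
  | cons a l ih =>
    obtain ⟨hal, hl⟩ := List.pairwise_cons.1 hl
    by_cases ha : a ≤ c
    · cases t with
      | zero => simp [ha]
      | succ t => simpa [ha] using ih hl t
    · have hzero : l.countP (· ≤ c) = 0 := by
        rw [List.countP_eq_zero]
        intro x hx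
        have := hal x hx
        rw [decide_eq_true_eq]
        omega
      cases t with
      | zero => simp [ha, hzero]
      | succ t => simpa [ha, hzero] using ih hl t

end Multisets

section NthIndex

/-- The index `i_{t+1}` of the monomial `x_{i_1}⋯x_{i_k}` with `i_1 ≤ ⋯ ≤ i_k`, the sequence being
continued by `D` for `t ≥ k`. For monomials on `[m]` the choice `D = m + 1` makes it monotone, and
makes the final segment of `F_d(u)` follow the same pattern as the pairs before it. -/
noncomputable def nthIndex (D : ℕ) (u : Multiset ℕ) (t : ℕ) : ℕ := (u.sort (· ≤ ·)).getD t D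

/-- The number of variables of index at most `c` in a monomial, with multiplicity: the counting
function dual to `nthIndex`. -/
def countLE (c : ℕ) (u : Multiset ℕ) : ℕ := u.countP (· ≤ c)

variable {D D' c m j t : ℕ} {u v : Multiset ℕ}

theorem nthIndex_le_iff (hc : c < D) : nthIndex D u t ≤ c ↔ t < countLE c u := by
  conv_rhs => rw [countLE, ← Multiset.sort_eq u (· ≤ ·), Multiset.coe_countP]
  exact getD_le_iff_lt_countP hc (Multiset.pairwise_sort u (· ≤ ·)) t

theorem countLE_cons (c a : ℕ) (u : Multiset ℕ) :
    countLE c (a ::ₘ u) = countLE c u + if a ≤ c then 1 else 0 := Multiset.countP_cons ..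

theorem countLE_le_card (c : ℕ) (u : Multiset ℕ) : countLE c u ≤ u.card :=
  Multiset.countP_le_card _ _

theorem countLE_eq_card (h : ∀ x ∈ u, x ≤ c) : countLE c u = u.card := Multiset.countP_eq_card.2 h

theorem countLE_mono (h : u ≤ v) : countLE c u ≤ countLE c v := Multiset.countP_le_of_le _ h

theorem nthIndex_of_card_le (h : u.card ≤ t) : nthIndex D u t = D :=
  List.getD_eq_default _ _ (by simpa using h)

theorem nthIndex_eq_getElem (h : t < u.card) :
    nthIndex D u t = (u.sort (· ≤ ·))[t]'(by simpa using h) := List.getD_eq_getElem ..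

theorem nthIndex_congr (h : t < u.card) : nthIndex D u t = nthIndex D' u t := by
  rw [nthIndex_eq_getElem h, nthIndex_eq_getElem h]

theorem nthIndex_mem (h : t < u.card) : nthIndex D u t ∈ u := by
  rw [nthIndex_eq_getElem h, ← Multiset.mem_sort (· ≤ ·)]
  exact List.getElem_mem _

theorem nthIndex_le (hu : ∀ x ∈ u, x ≤ m) (t : ℕ) : nthIndex (m + 1) u t ≤ m + 1 := by
  rcases lt_or_ge t u.card with h | h
  · exact (hu _ (nthIndex_mem h)).trans m.le_succ
  · exact (nthIndex_of_card_le h).le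

theorem nthIndex_monotone (hu : ∀ x ∈ u, x ≤ m) : Monotone (nthIndex (m + 1) u) := by
  intro s t hst
  rcases lt_or_ge (nthIndex (m + 1) u t) (m + 1) with h | h
  · exact (nthIndex_le_iff h).2 (hst.trans_lt ((nthIndex_le_iff h).1 le_rfl))
  · exact (nthIndex_le hu s).trans h

theorem map_nthIndex_range (D : ℕ) (u : Multiset ℕ) :
    (Multiset.range u.card).map (nthIndex D u) = u := by
  conv_rhs => rw [← Multiset.sort_eq u (· ≤ ·)]
  rw [← Multiset.coe_range, Multiset.map_coe]
  congr 1
  refine List.ext_getElem (by simp) fun i _ hi => ?_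
  rw [List.getElem_map, List.getElem_range, nthIndex_eq_getElem (by simpa using hi)]

theorem mem_iff_exists_nthIndex {x : ℕ} : x ∈ u ↔ ∃ t < u.card, nthIndex D u t = x := by
  conv_lhs => rw [← map_nthIndex_range D u]
  simp only [Multiset.mem_map, Multiset.mem_range]

theorem nthIndex_cons_of_lt (hj : ∀ x ∈ u, x ≤ j) (ht : t < u.card) :
    nthIndex D (j ::ₘ u) t = nthIndex D u t := by
  rw [nthIndex, sort_cons_of_forall_le hj, List.getD_append _ _ _ _ (by simpa using ht), nthIndex]

theorem nthIndex_cons_card (hj : ∀ x ∈ u, x ≤ j) : nthIndex D (j ::ₘ u) u.card = j := by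
  rw [nthIndex, sort_cons_of_forall_le hj, List.getD_append_right _ _ _ _ (by simp)]
  simp

theorem nthIndex_map_range {q : ℕ → ℕ} (hq : Monotone q) {r : ℕ} (ht : t < r) :
    nthIndex D ((Multiset.range r).map q) t = q t := by
  induction r with
  | zero => omega
  | succ r ih =>
    have hmax : ∀ x ∈ (Multiset.range r).map q, x ≤ q r := by
      intro x hx
      obtain ⟨s, hs, rfl⟩ := Multiset.mem_map.1 hx
      exact hq (Multiset.mem_range.1 hs).le
    rw [Multiset.range_succ, Multiset.map_cons]
    rcases Nat.lt_succ_iff_lt_or_eq.1 ht with h | rfl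
    · rw [nthIndex_cons_of_lt hmax (by simpa using h), ih h]
    · simpa using nthIndex_cons_card (D := D) hmax

end NthIndex

section ShiftClosed

/-- A set of monomials on `[m]` closed under divisibility and under raising variables up to index
`m`: a shifted order ideal, except that it need not contain `1` and the variables. Auxiliary ideals
of this kind, possibly with monomials of every degree, occur in the induction for
`IsSpreadGeneric.hasLeadingMonomial_dominating`. -/
structure ShiftClosed (m : ℕ) (U : Set (Multiset ℕ)) : Prop where
  mem_Icc : ∀ u ∈ U, ∀ x ∈ u, x ∈ Finset.Icc 1 m
  down : ∀ u ∈ U, ∀ v, v ≤ u → v ∈ U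
  shift : ∀ u : Multiset ℕ, ∀ i j : ℕ, i < j → j ≤ m → (i ::ₘ u) ∈ U → (j ::ₘ u) ∈ U

theorem _root_.IsShiftedOrderIdeal.shiftClosed {m : ℕ} {U : Set (Multiset ℕ)}
    (hU : IsShiftedOrderIdeal m U) : ShiftClosed m U :=
  ⟨hU.1, hU.2.2.2.1, hU.2.2.2.2⟩

namespace ShiftClosed

variable {m : ℕ} {U : Set (Multiset ℕ)}

theorem le_of_mem (hU : ShiftClosed m U) {u : Multiset ℕ} (hu : u ∈ U) : ∀ x ∈ u, x ≤ m :=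
  fun x hx => (Finset.mem_Icc.1 (hU.mem_Icc u hu x hx)).2

theorem map_add_mem (hU : ShiftClosed m U) {f g : ℕ → ℕ} {T s : Multiset ℕ}
    (hfg : ∀ t ∈ T, f t ≤ g t) (hg : ∀ t ∈ T, g t ≤ m) (h : T.map f + s ∈ U) :
    T.map g + s ∈ U := by
  induction T using Multiset.induction generalizing s with
  | empty => simpa using h
  | cons a T ih =>
    rw [Multiset.map_cons, Multiset.cons_add] at h ⊢
    have hraised : g a ::ₘ (T.map f + s) ∈ U := by
      rcases (hfg a (Multiset.mem_cons_self _ _)).lt_or_eq with hlt | heq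
      · exact hU.shift _ _ _ hlt (hg a (Multiset.mem_cons_self _ _)) h
      · rwa [← heq]
    rw [← Multiset.add_cons] at hraised ⊢
    exact ih (fun t ht => hfg t (Multiset.mem_cons_of_mem ht))
      (fun t ht => hg t (Multiset.mem_cons_of_mem ht)) hraised

theorem mem_of_nthIndex_le (hU : ShiftClosed m U) {u v : Multiset ℕ} (hu : u ∈ U)
    (hv : ∀ x ∈ v, x ≤ m) (h : ∀ t < v.card, nthIndex (m + 1) u t ≤ nthIndex (m + 1) v t) :
    v ∈ U := by
  have hcard : v.card ≤ u.card := by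
    by_contra! hlt
    have hle := h u.card hlt
    rw [nthIndex_of_card_le le_rfl] at hle
    have := hv _ (nthIndex_mem (D := m + 1) hlt)
    omega
  have hpart : (Multiset.range v.card).map (nthIndex (m + 1) u) + 0 ∈ U := by
    rw [add_zero]
    refine hU.down u hu _ ?_
    conv_rhs => rw [← map_nthIndex_range (m + 1) u]
    exact Multiset.map_le_map (Multiset.range_le.2 hcard)
  have hraised := hU.map_add_mem (g := nthIndex (m + 1) v)
    (fun t ht => h t (Multiset.mem_range.1 ht))
    (fun t ht => hv _ (nthIndex_mem (Multiset.mem_range.1 ht))) hpart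
  rwa [add_zero, map_nthIndex_range] at hraised

theorem exists_nthIndex_eq (hU : ShiftClosed m U) {κ : ℕ} {u : Multiset ℕ} (hu : u ∈ U)
    {q : ℕ → ℕ} (hq : Monotone q) (hqm : ∀ t, q t ≤ m + 1)
    (hle : ∀ t < κ, nthIndex (m + 1) u t ≤ q t) :
    ∃ u' ∈ U, ∀ t < κ, nthIndex (m + 1) u' t = q t := by
  obtain ⟨r, hrκ, hr⟩ : ∃ r ≤ κ, ∀ t < κ, q t ≤ m ↔ t < r := by
    induction κ with
    | zero => exact ⟨0, le_rfl, by simp⟩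
    | succ κ ih =>
      by_cases h : q κ ≤ m
      · exact ⟨κ + 1, le_rfl, fun t ht => ⟨fun _ => ht, fun _ => (hq (by omega)).trans h⟩⟩
      · obtain ⟨r, hrκ, hr⟩ := ih fun t ht => hle t (ht.trans κ.lt_succ_self)
        refine ⟨r, by omega, fun t ht => ?_⟩
        rcases Nat.lt_succ_iff_lt_or_eq.1 ht with h' | rfl
        · exact hr t h'
        · exact ⟨fun h' => absurd h' h, fun h' => by omega⟩
  have hval : ∀ t < κ, nthIndex (m + 1) ((Multiset.range r).map q) t = q t := by
    intro t ht
    rcases lt_or_ge t r with h | h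
    · exact nthIndex_map_range hq h
    · rw [nthIndex_of_card_le (by simpa using h)]
      have := hr t ht
      have := hqm t
      omega
  refine ⟨_, hU.mem_of_nthIndex_le hu ?_ ?_, hval⟩
  · intro x hx
    obtain ⟨t, ht, rfl⟩ := Multiset.mem_map.1 hx
    rw [Multiset.mem_range] at ht
    exact (hr t (ht.trans_le hrκ)).2 ht
  · intro t ht
    rw [Multiset.card_map, Multiset.card_range] at ht
    rw [hval t (ht.trans_le hrκ)]
    exact hle t (ht.trans_le hrκ)

end ShiftClosed

end ShiftClosed

/-! ### Squeezed balls and monomials in their Stanley–Reisner ideals -/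

section Facets

/-- The vertex in position `s` of the list `q_0, q_0 + 1, q_1 + 2, q_1 + 3, q_2 + 4, …`; for
`q = nthIndex (m + 1) u` and `s ≤ d` these are the vertices of `F_d(u)` in increasing order. -/
def facetVertex (q : ℕ → ℕ) (s : ℕ) : ℕ := q (s / 2) + s

/-- The set of the first `d + 1` vertices of the list attached to `q`, so that `F_d(u)` is
`facetOfSeq d (nthIndex (m + 1) u)`; working with sequences allows raising and lowering parts of
a facet without tracking degrees. -/
def facetOfSeq (d : ℕ) (q : ℕ → ℕ) : Finset ℕ := (Finset.range (d + 1)).image (facetVertex q)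

variable {m d t : ℕ} {q q' : ℕ → ℕ}

theorem facetVertex_two_mul (q : ℕ → ℕ) (t : ℕ) : facetVertex q (2 * t) = q t + 2 * t := by
  rw [facetVertex, Nat.mul_div_cancel_left _ two_pos]

theorem facetVertex_two_mul_add_one (q : ℕ → ℕ) (t : ℕ) :
    facetVertex q (2 * t + 1) = q t + 2 * t + 1 := by
  rw [facetVertex, show (2 * t + 1) / 2 = t by omega, add_assoc]

theorem facetVertex_strictMono (hq : Monotone q) : StrictMono (facetVertex q) :=
  fun _ _ hst => add_lt_add_of_le_of_lt (hq (Nat.div_le_div_right hst.le)) hst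

theorem mem_facetOfSeq {x : ℕ} : x ∈ facetOfSeq d q ↔ ∃ s ≤ d, facetVertex q s = x := by
  simp [facetOfSeq]

theorem facetVertex_mem {s : ℕ} (hs : s ≤ d) : facetVertex q s ∈ facetOfSeq d q :=
  mem_facetOfSeq.2 ⟨s, hs, rfl⟩

theorem two_mul_vertex_mem (ht : 2 * t ≤ d) : q t + 2 * t ∈ facetOfSeq d q :=
  facetVertex_two_mul q t ▸ facetVertex_mem ht

theorem two_mul_add_one_vertex_mem (ht : 2 * t + 1 ≤ d) : q t + 2 * t + 1 ∈ facetOfSeq d q :=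
  facetVertex_two_mul_add_one q t ▸ facetVertex_mem ht

theorem card_facetOfSeq (hq : Monotone q) : (facetOfSeq d q).card = d + 1 := by
  rw [facetOfSeq, Finset.card_image_of_injective _ (facetVertex_strictMono hq).injective,
    Finset.card_range]

theorem facetOfSeq_congr (h : ∀ t < d / 2 + 1, q t = q' t) : facetOfSeq d q = facetOfSeq d q' := by
  refine Finset.image_congr fun s hs => ?_
  rw [Finset.coe_range, Set.mem_Iio] at hs
  rw [facetVertex, facetVertex, h (s / 2) (by omega)]

theorem Fd_eq_facetOfSeq {u : Multiset ℕ} (hu : 2 * u.card ≤ d + 1) :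
    Fd (m + d + 1) d u = facetOfSeq d (nthIndex (m + 1) u) := by
  have hindex : ∀ t < u.card, (u.sort (· ≤ ·)).getD t 0 = nthIndex (m + 1) u t :=
    fun t ht => nthIndex_congr (D := 0) ht
  ext x
  simp only [Fd, Finset.mem_union, Finset.mem_biUnion, Finset.mem_range, Finset.mem_insert,
    Finset.mem_singleton, Finset.mem_Icc]
  constructor
  · rintro (⟨t, ht, hx⟩ | ⟨hx, hx'⟩)
    · rw [hindex t ht] at hx
      rcases hx with rfl | rfl
      · exact two_mul_vertex_mem (by omega)
      · exact two_mul_add_one_vertex_mem (by omega)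
    · refine mem_facetOfSeq.2 ⟨x - (m + 1), by omega, ?_⟩
      rw [facetVertex, nthIndex_of_card_le (by omega)]
      omega
  · intro hx
    obtain ⟨s, hs, rfl⟩ := mem_facetOfSeq.1 hx
    rw [facetVertex]
    rcases lt_or_ge (s / 2) u.card with h | h
    · refine Or.inl ⟨s / 2, h, ?_⟩
      rw [hindex _ h]
      omega
    · rw [nthIndex_of_card_le h]
      right
      omega

theorem add_sub_le_of_strictMonoOn_Iio {f : ℕ → ℕ} {r : ℕ} (hf : StrictMonoOn f (Set.Iio r))
    {a b : ℕ} (hab : a ≤ b) (hb : b < r) : f a + (b - a) ≤ f b := by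
  induction b, hab using Nat.le_induction with
  | base => omega
  | succ b hab ih =>
    have := ih (by omega)
    have := hf (Set.mem_Iio.2 (by omega : b < r)) (Set.mem_Iio.2 hb) b.lt_succ_self
    omega

theorem exists_positions_of_mem_facetOfSeq {r e : ℕ} {a : ℕ → ℕ} (ha : Monotone a)
    (hq : Monotone q) (h : ∀ t < r, a t + 2 * t + e ∈ facetOfSeq d q) :
    ∃ s : ℕ → ℕ, (∀ t < r, s t ≤ d ∧ facetVertex q (s t) = a t + 2 * t + e) ∧
      StrictMonoOn (fun t => s t / 2) (Set.Iio r) := by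
  choose! s hs using fun t (ht : t < r) => mem_facetOfSeq.1 (h t ht)
  refine ⟨s, hs, fun t₁ ht₁ t₂ ht₂ hlt => ?_⟩
  by_contra! hle
  have h₁ := (hs t₁ ht₁).2
  have h₂ := (hs t₂ ht₂).2
  have := ha hlt.le
  have := hq hle
  rw [facetVertex] at h₁ h₂
  omega

end Facets

section Ball

/-- The complex generated by the facets of the monomials in `U`. It is the squeezed ball `B_d(U)`
with `n = m + d + 1` when the degrees are at most `(d + 1) / 2`, but makes sense without any bound
on them. -/
def ballOfMonomials (m d : ℕ) (U : Set (Multiset ℕ)) : Set (Finset ℕ) :=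
  {G | ∃ u ∈ U, G ⊆ facetOfSeq d (nthIndex (m + 1) u)}

variable {m d : ℕ} {U : Set (Multiset ℕ)}

theorem facetOfSeq_mem_ballOfMonomials {u : Multiset ℕ} (hu : u ∈ U) :
    facetOfSeq d (nthIndex (m + 1) u) ∈ ballOfMonomials m d U := ⟨u, hu, Finset.Subset.rfl⟩

theorem squeezedBall_eq_ballOfMonomials (hdeg : ∀ u ∈ U, 2 * u.card ≤ d + 1) :
    squeezedBall (m + d + 1) d U = ballOfMonomials m d U :=
  Set.ext fun _ => exists_congr fun u => and_congr_right fun hu => by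
    rw [Fd_eq_facetOfSeq (hdeg u hu)]

theorem ballOfMonomials_downward_closed {F G : Finset ℕ} (hG : G ∈ ballOfMonomials m d U)
    (hFG : F ⊆ G) : F ∈ ballOfMonomials m d U :=
  hG.imp fun _ hu => ⟨hu.1, hFG.trans hu.2⟩

theorem complexBoundary_ballOfMonomials_subset (m d : ℕ) (U : Set (Multiset ℕ)) :
    complexBoundary d (ballOfMonomials m d U) ⊆ ballOfMonomials m d U := by
  rintro F ⟨G, hFG, hG, -⟩
  exact ballOfMonomials_downward_closed hG hFG

theorem exists_eq_facetOfSeq_of_card_eq (hU : ShiftClosed m U) {H : Finset ℕ}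
    (h : H ∈ ballOfMonomials m d U) (hc : H.card = d + 1) :
    ∃ u ∈ U, H = facetOfSeq d (nthIndex (m + 1) u) := by
  obtain ⟨u, hu, hsub⟩ := h
  refine ⟨u, hu, Finset.eq_of_subset_of_card_le hsub ?_⟩
  rw [card_facetOfSeq (nthIndex_monotone (hU.le_of_mem hu)), hc]

end Ball

section Spread

/-- The monomial `x_{i_1 + e} x_{i_2 + 2 + e} ⋯ x_{i_k + 2 (k - 1) + e}` for
`u = x_{i_1} ⋯ x_{i_k}`. For `e = 0`, respectively `e = 1`, its support consists of the first,
respectively second, elements of the pairs making up `F_d(u)`. -/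
noncomputable def spread (e : ℕ) (u : Multiset ℕ) : Multiset ℕ :=
  (Multiset.range u.card).map fun t => nthIndex 0 u t + 2 * t + e

theorem card_spread (e : ℕ) (u : Multiset ℕ) : (spread e u).card = u.card := by simp [spread]

theorem mem_spread {e D : ℕ} {u : Multiset ℕ} {x : ℕ} :
    x ∈ spread e u ↔ ∃ t < u.card, nthIndex D u t + 2 * t + e = x := by
  simp only [spread, Multiset.mem_map, Multiset.mem_range]
  exact exists_congr fun t => and_congr_right fun ht => by rw [nthIndex_congr ht]

theorem spread_cons {e j : ℕ} {u : Multiset ℕ} (hj : ∀ x ∈ u, x ≤ j) :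
    spread e (j ::ₘ u) = (j + 2 * u.card + e) ::ₘ spread e u := by
  rw [spread, Multiset.card_cons, Multiset.range_succ, Multiset.map_cons, nthIndex_cons_card hj]
  congr 1
  refine Multiset.map_congr rfl fun t ht => ?_
  rw [nthIndex_cons_of_lt hj (Multiset.mem_range.1 ht)]

theorem ShiftClosed.mem_of_spread_zero_mem_ball {m d : ℕ} {U : Set (Multiset ℕ)}
    (hU : ShiftClosed m U) {v : Multiset ℕ} (hv : ∀ x ∈ v, x ≤ m)
    (h : (spread 0 v).toFinset ∈ ballOfMonomials m d U) : v ∈ U := by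
  obtain ⟨u, hu, hsub⟩ := h
  have hq := nthIndex_monotone (hU.le_of_mem hu)
  obtain ⟨s, hs, hmono⟩ := exists_positions_of_mem_facetOfSeq (nthIndex_monotone hv) hq
    fun t ht => hsub (Multiset.mem_toFinset.2 (mem_spread.2 ⟨t, ht, rfl⟩))
  refine hU.mem_of_nthIndex_le hu hv fun t ht => ?_
  have hpos := (hs t ht).2
  have hle := add_sub_le_of_strictMonoOn_Iio hmono t.zero_le ht
  have := hq (show t ≤ s t / 2 by omega)
  rw [facetVertex] at hpos
  omega

end Spread

section ChainDecomposition

variable {m d b : ℕ} {u s w : Multiset ℕ}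

/-- The monomial on `[m + d + 1]` obtained from the monomials `u` on `[m]` and `s` on
`[m + 1, m + d + 1]` by spreading `u` and moving the variables of `s` to the vertices of `F_d(u)`
in the corresponding positions. -/
noncomputable def chainMonomial (m : ℕ) (u s : Multiset ℕ) : Multiset ℕ :=
  spread 0 u + s.map fun c => facetVertex (nthIndex (m + 1) u) (c - (m + 1))

/-- The pair `(u, s)` encodes `w = chainMonomial m u s`, and `w` is supported on the facet of
`u`. -/
structure IsChainDecomposition (m d : ℕ) (w u s : Multiset ℕ) : Prop where
  left_mem : ∀ x ∈ u, x ∈ Finset.Icc 1 m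
  right_mem : ∀ c ∈ s, c ∈ Finset.Icc (m + 1) (m + d + 1)
  eq : w = chainMonomial m u s
  mem_facet : ∀ x ∈ w, x ∈ facetOfSeq d (nthIndex (m + 1) u)

namespace IsChainDecomposition

theorem left_le (h : IsChainDecomposition m d w u s) : ∀ x ∈ u, x ≤ m :=
  fun x hx => (Finset.mem_Icc.1 (h.left_mem x hx)).2

theorem card_left_le (h : IsChainDecomposition m d w u s) : u.card ≤ w.card := by
  rw [h.eq, chainMonomial, Multiset.card_add, card_spread]
  exact Nat.le_add_right _ _

theorem cons_of_mem (h : IsChainDecomposition m d w u s)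
    (hb : b ∈ facetOfSeq d (nthIndex (m + 1) u)) :
    ∃ c, IsChainDecomposition m d (b ::ₘ w) u (c ::ₘ s) := by
  obtain ⟨y, hy, rfl⟩ := mem_facetOfSeq.1 hb
  refine ⟨m + 1 + y, h.left_mem, ?_, ?_, Multiset.forall_mem_cons.2 ⟨hb, h.mem_facet⟩⟩
  · exact Multiset.forall_mem_cons.2 ⟨Finset.mem_Icc.2 (by omega), h.right_mem⟩
  · rw [h.eq, chainMonomial, chainMonomial, Multiset.map_cons, Nat.add_sub_cancel_left,
      Multiset.add_cons]

theorem lt_of_notMem_facet (hbn : b ≤ m + d + 1)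
    (hb : b ∉ facetOfSeq d (nthIndex (m + 1) u)) : b < m + 1 + 2 * u.card := by
  contrapose! hb
  refine mem_facetOfSeq.2 ⟨b - (m + 1), by omega, ?_⟩
  rw [facetVertex, nthIndex_of_card_le (by omega)]
  omega

theorem add_two_mul_card_le_of_notMem_facet (hum : ∀ x ∈ u, x ≤ m) (hu : 2 * u.card ≤ d)
    (hspread : ∀ x ∈ spread 0 u, x ≤ b) (hb : b ∉ facetOfSeq d (nthIndex (m + 1) u)) :
    ∀ x ∈ u, x + 2 * u.card ≤ b := by
  intro x hx
  obtain ⟨t, ht, rfl⟩ := (mem_iff_exists_nthIndex (D := m + 1)).1 hx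
  set r := u.card - 1
  have hle : nthIndex (m + 1) u r + 2 * r ≤ b :=
    hspread _ (mem_spread.2 ⟨r, by omega, rfl⟩)
  have hne₀ : b ≠ nthIndex (m + 1) u r + 2 * r := fun h => hb (h ▸ two_mul_vertex_mem (by omega))
  have hne₁ : b ≠ nthIndex (m + 1) u r + 2 * r + 1 :=
    fun h => hb (h ▸ two_mul_add_one_vertex_mem (by omega))
  have := nthIndex_monotone hum (show t ≤ r by omega)
  omega

theorem facetVertex_nthIndex_cons {j y : ℕ} (hj : ∀ x ∈ u, x ≤ j) (hjm : j ≤ m)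
    (hy : facetVertex (nthIndex (m + 1) u) y ≤ j + 2 * u.card) :
    facetVertex (nthIndex (m + 1) (j ::ₘ u)) y = facetVertex (nthIndex (m + 1) u) y := by
  rw [facetVertex] at hy
  rw [facetVertex, facetVertex, nthIndex_cons_of_lt hj]
  by_contra! hcard
  rw [nthIndex_of_card_le hcard] at hy
  omega

theorem cons_of_notMem (h : IsChainDecomposition m d w u s) (hcard : 2 * w.card ≤ d)
    (hmax : ∀ x ∈ w, x ≤ b) (hbn : b ∈ Finset.Icc 1 (m + d + 1))
    (hb : b ∉ facetOfSeq d (nthIndex (m + 1) u)) :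
    ∃ j, IsChainDecomposition m d (b ::ₘ w) (j ::ₘ u) s := by
  have hu : 2 * u.card ≤ d := (Nat.mul_le_mul_left 2 h.card_left_le).trans hcard
  obtain ⟨hb₁, hbn⟩ := Finset.mem_Icc.1 hbn
  have hlt := lt_of_notMem_facet hbn hb
  have hle := add_two_mul_card_le_of_notMem_facet h.left_le hu (fun x hx => hmax x (by
    rw [h.eq]; exact Multiset.mem_add.2 (Or.inl hx))) hb
  obtain ⟨j, rfl, hj₁⟩ : ∃ j, b = j + 2 * u.card ∧ 1 ≤ j := by
    refine ⟨b - 2 * u.card, ?_⟩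
    rcases Multiset.empty_or_exists_mem u with rfl | ⟨x, hx⟩
    · rw [Multiset.card_zero]
      omega
    · have := Finset.mem_Icc.1 (h.left_mem x hx)
      have := hle x hx
      omega
  have hj : ∀ x ∈ u, x ≤ j := fun x hx => Nat.le_of_add_le_add_right (hle x hx)
  have hvertex : ∀ y, facetVertex (nthIndex (m + 1) u) y ∈ w →
      facetVertex (nthIndex (m + 1) (j ::ₘ u)) y = facetVertex (nthIndex (m + 1) u) y :=
    fun y hy => facetVertex_nthIndex_cons hj (by omega) (hmax _ hy)
  refine ⟨j, Multiset.forall_mem_cons.2 ⟨Finset.mem_Icc.2 (by omega), h.left_mem⟩, h.right_mem,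
    ?_, Multiset.forall_mem_cons.2 ⟨mem_facetOfSeq.2 ⟨2 * u.card, hu, ?_⟩, fun x hx => ?_⟩⟩
  · rw [chainMonomial, spread_cons hj, Multiset.cons_add, add_zero]
    conv_lhs => rw [h.eq, chainMonomial]
    refine congrArg _ (congrArg _ (Multiset.map_congr rfl fun c hc => (hvertex _ ?_).symm))
    rw [h.eq, chainMonomial]
    exact Multiset.mem_add.2 (Or.inr (Multiset.mem_map_of_mem _ hc))
  · rw [facetVertex_two_mul, nthIndex_cons_card hj]
  · obtain ⟨y, hy, rfl⟩ := mem_facetOfSeq.1 (h.mem_facet x hx)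
    exact hvertex y hx ▸ facetVertex_mem hy

end IsChainDecomposition

theorem exists_isChainDecomposition (hcard : w.card ≤ d / 2 + 1)
    (hw : ∀ x ∈ w, x ∈ Finset.Icc 1 (m + d + 1)) : ∃ u s, IsChainDecomposition m d w u s := by
  induction w using multiset_induction_on_max with
  | zero => exact ⟨0, 0, by simp, by simp, by simp [chainMonomial, spread], by simp⟩
  | cons b w hmax ih =>
    rw [Multiset.card_cons] at hcard
    rw [Multiset.forall_mem_cons] at hw
    obtain ⟨u, s, h⟩ := ih (by omega) hw.2
    by_cases hb : b ∈ facetOfSeq d (nthIndex (m + 1) u)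
    · obtain ⟨c, hc⟩ := h.cons_of_mem hb
      exact ⟨_, _, hc⟩
    · obtain ⟨j, hj⟩ := h.cons_of_notMem (by omega) hmax hw.1 hb
      exact ⟨_, _, hj⟩

end ChainDecomposition

section Counting

/-- The monomials of degree `k` in the variables with indices in `[N]`. -/
def monomialsOn (N k : ℕ) : Finset (Multiset ℕ) :=
  ((Finset.Icc 1 N).sym k).map ⟨fun a : Sym ℕ k => (a : Multiset ℕ), Sym.coe_injective⟩

variable {m d k N : ℕ} {U : Set (Multiset ℕ)} {w : Multiset ℕ}

theorem mem_monomialsOn : w ∈ monomialsOn N k ↔ (∀ x ∈ w, x ∈ Finset.Icc 1 N) ∧ w.card = k := by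
  rw [monomialsOn, Finset.mem_map]
  constructor
  · rintro ⟨a, ha, rfl⟩
    exact ⟨Finset.mem_sym_iff.1 ha, a.2⟩
  · rintro ⟨hw, hcard⟩
    exact ⟨⟨w, hcard⟩, Finset.mem_sym_iff.2 hw, rfl⟩

open Classical in
/-- The monomials of degree `k` on `[m + d + 1]` in the Stanley–Reisner ideal of the ball of
`U`. -/
noncomputable def nonfaceMonomials (m d k : ℕ) (U : Set (Multiset ℕ)) : Finset (Multiset ℕ) :=
  {w ∈ monomialsOn (m + d + 1) k | w.toFinset ∉ ballOfMonomials m d U}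

open Classical in
/-- The monomials of degree `k` on `[m + d + 1]` whose part in the first `m` variables is not in
`U`. For shift-closed `U` and `k ≤ d / 2 + 1` they turn out to be the monomials of the generic
initial ideal of the ball of `U`. -/
noncomputable def nonmemberMonomials (m d k : ℕ) (U : Set (Multiset ℕ)) : Finset (Multiset ℕ) :=
  {v ∈ monomialsOn (m + d + 1) k | v.filter (· ≤ m) ∉ U}

theorem mem_nonfaceMonomials : w ∈ nonfaceMonomials m d k U ↔
    w ∈ monomialsOn (m + d + 1) k ∧ w.toFinset ∉ ballOfMonomials m d U := by
  classical rw [nonfaceMonomials, Finset.mem_filter]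

theorem mem_nonmemberMonomials : w ∈ nonmemberMonomials m d k U ↔
    w ∈ monomialsOn (m + d + 1) k ∧ w.filter (· ≤ m) ∉ U := by
  classical rw [nonmemberMonomials, Finset.mem_filter]

theorem card_nonfaceMonomials_le (hk : k ≤ d / 2 + 1) (U : Set (Multiset ℕ)) :
    (nonfaceMonomials m d k U).card ≤ (nonmemberMonomials m d k U).card := by
  refine Finset.card_le_card_of_surjOn
    (fun v => chainMonomial m (v.filter (· ≤ m)) (v.filter (¬ · ≤ m))) fun w hw => ?_
  obtain ⟨hwM, hwB⟩ := mem_nonfaceMonomials.1 hw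
  obtain ⟨hwN, hcard⟩ := mem_monomialsOn.1 hwM
  obtain ⟨u, s, h⟩ := exists_isChainDecomposition (by omega) hwN
  have hs : ∀ x ∈ s, ¬ x ≤ m := fun x hx => by
    have := Finset.mem_Icc.1 (h.right_mem x hx)
    omega
  have hfilter : (u + s).filter (· ≤ m) = u := by
    rw [Multiset.filter_add, Multiset.filter_eq_self.2 h.left_le, Multiset.filter_eq_nil.2 hs,
      add_zero]
  have hfilter' : (u + s).filter (¬ · ≤ m) = s := by
    rw [Multiset.filter_add, Multiset.filter_eq_self.2 hs,
      Multiset.filter_eq_nil.2 fun x hx => not_not.2 (h.left_le x hx), zero_add]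
  refine ⟨u + s, ?_, ?_⟩
  · rw [Finset.mem_coe, mem_nonmemberMonomials, hfilter, mem_monomialsOn]
    refine ⟨⟨fun x hx => ?_, ?_⟩, fun hU => hwB ⟨u, hU, fun x hx => ?_⟩⟩
    · rcases Multiset.mem_add.1 hx with hx | hx
      · exact Finset.Icc_subset_Icc_right (by omega) (h.left_mem x hx)
      · exact Finset.Icc_subset_Icc_left (by omega) (h.right_mem x hx)
    · rw [← hcard, h.eq, chainMonomial, Multiset.card_add, Multiset.card_add, card_spread,
        Multiset.card_map]
    · exact h.mem_facet x (Multiset.mem_toFinset.1 hx)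
  · simp only [hfilter, hfilter', h.eq]

end Counting

/-! ### Faces and nonfaces of the squeezed sphere in low degrees -/

section Moves

/-- The sequence `q` raised by one from `t₀` to the end of the block of constancy of `q` containing
`t₀`. This exchanges the vertex `q t₀ + 2 t₀` of the facet of `q` for another one. -/
def raiseFrom (q : ℕ → ℕ) (t₀ t : ℕ) : ℕ := if t₀ ≤ t ∧ q t = q t₀ then q t + 1 else q t

/-- The sequence `q` lowered by one from the start of the block of constancy of `q` containing
`t₀` up to `t₀`. This exchanges the vertex `q t₀ + 2 t₀ + 1` of the facet of `q` for another
one. -/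
def lowerUpTo (q : ℕ → ℕ) (t₀ t : ℕ) : ℕ := if t ≤ t₀ ∧ q t = q t₀ then q t - 1 else q t

variable {m d t₀ : ℕ} {q : ℕ → ℕ}

theorem le_raiseFrom (q : ℕ → ℕ) (t₀ t : ℕ) : q t ≤ raiseFrom q t₀ t := by
  unfold raiseFrom
  split_ifs <;> omega

theorem raiseFrom_le (hqm : ∀ t, q t ≤ m + 1) (h : q t₀ ≤ m) (t : ℕ) :
    raiseFrom q t₀ t ≤ m + 1 := by
  have := hqm t
  unfold raiseFrom
  split_ifs <;> omega

theorem lowerUpTo_le (q : ℕ → ℕ) (t₀ t : ℕ) : lowerUpTo q t₀ t ≤ q t := by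
  unfold lowerUpTo
  split_ifs <;> omega

theorem raiseFrom_monotone (hq : Monotone q) (t₀ : ℕ) : Monotone (raiseFrom q t₀) := by
  intro s t hst
  have := hq hst
  unfold raiseFrom
  split_ifs <;> omega

theorem lowerUpTo_monotone (hq : Monotone q) (t₀ : ℕ) : Monotone (lowerUpTo q t₀) := by
  intro s t hst
  have := hq hst
  unfold lowerUpTo
  split_ifs <;> omega

theorem facetOfSeq_erase_subset_raiseFrom (hq : Monotone q) (t₀ : ℕ) :
    (facetOfSeq d q).erase (q t₀ + 2 * t₀) ⊆ facetOfSeq d (raiseFrom q t₀) := by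
  intro x hx
  obtain ⟨hne, hx⟩ := Finset.mem_erase.1 hx
  obtain ⟨s, hs, rfl⟩ := mem_facetOfSeq.1 hx
  by_cases h : t₀ ≤ s / 2 ∧ q (s / 2) = q t₀
  · have hs₀ : s ≠ 2 * t₀ := fun h => hne (h ▸ facetVertex_two_mul q t₀)
    have hprev : t₀ ≤ (s - 1) / 2 := by omega
    have := hq hprev
    have := hq (show (s - 1) / 2 ≤ s / 2 by omega)
    refine mem_facetOfSeq.2 ⟨s - 1, by omega, ?_⟩
    rw [facetVertex, facetVertex, raiseFrom, if_pos ⟨hprev, by omega⟩]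
    omega
  · exact mem_facetOfSeq.2 ⟨s, hs, by rw [facetVertex, facetVertex, raiseFrom, if_neg h]⟩

theorem notMem_facetOfSeq_raiseFrom (hq : Monotone q) (t₀ : ℕ) :
    q t₀ + 2 * t₀ ∉ facetOfSeq d (raiseFrom q t₀) := by
  intro hx
  obtain ⟨s, -, hx⟩ := mem_facetOfSeq.1 hx
  rw [facetVertex, raiseFrom] at hx
  split_ifs at hx with h
  · omega
  · rcases le_or_gt t₀ (s / 2) with hle | hlt
    · have := hq hle
      omega
    · have := hq hlt.le
      omega

theorem facetOfSeq_erase_subset_lowerUpTo (hq : Monotone q) (ht₀ : 2 * t₀ + 1 ≤ d)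
    (hpos : 0 < q t₀) :
    (facetOfSeq d q).erase (q t₀ + 2 * t₀ + 1) ⊆ facetOfSeq d (lowerUpTo q t₀) := by
  intro x hx
  obtain ⟨hne, hx⟩ := Finset.mem_erase.1 hx
  obtain ⟨s, hs, rfl⟩ := mem_facetOfSeq.1 hx
  by_cases h : s / 2 ≤ t₀ ∧ q (s / 2) = q t₀
  · have hs₀ : s ≠ 2 * t₀ + 1 := fun h => hne (h ▸ facetVertex_two_mul_add_one q t₀)
    have hnext : (s + 1) / 2 ≤ t₀ := by omega
    have := hq hnext
    have := hq (show s / 2 ≤ (s + 1) / 2 by omega)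
    refine mem_facetOfSeq.2 ⟨s + 1, by omega, ?_⟩
    rw [facetVertex, facetVertex, lowerUpTo, if_pos ⟨hnext, by omega⟩]
    omega
  · exact mem_facetOfSeq.2 ⟨s, hs, by rw [facetVertex, facetVertex, lowerUpTo, if_neg h]⟩

theorem notMem_facetOfSeq_lowerUpTo (hq : Monotone q) (hpos : 0 < q t₀) :
    q t₀ + 2 * t₀ + 1 ∉ facetOfSeq d (lowerUpTo q t₀) := by
  intro hx
  obtain ⟨s, -, hx⟩ := mem_facetOfSeq.1 hx
  rw [facetVertex, lowerUpTo] at hx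
  split_ifs at hx with h
  · omega
  · rcases le_or_gt (s / 2) t₀ with hle | hlt
    · have := hq hle
      omega
    · have := hq hlt.le
      omega

end Moves

section LowDegreeFaces

variable {m d : ℕ} {U : Set (Multiset ℕ)}

theorem ShiftClosed.exists_raised_facet (hU : ShiftClosed m U) {u : Multiset ℕ} (hu : u ∈ U)
    {t₀ : ℕ} (h : nthIndex (m + 1) u t₀ ≤ m) :
    ∃ u' ∈ U, ∀ t < d / 2 + 1, nthIndex (m + 1) u' t = raiseFrom (nthIndex (m + 1) u) t₀ t :=
  hU.exists_nthIndex_eq hu (raiseFrom_monotone (nthIndex_monotone (hU.le_of_mem hu)) t₀)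
    (raiseFrom_le (nthIndex_le (hU.le_of_mem hu)) h) fun t _ => le_raiseFrom _ t₀ t

theorem exists_two_mul_vertex_notMem {q : ℕ → ℕ} (hq : Monotone q) {r : ℕ} {F : Finset ℕ}
    (hF : F.card < r) : ∃ t < r, q t + 2 * t ∉ F := by
  have hinj : Function.Injective fun t => q t + 2 * t :=
    (hq.add_strictMono (strictMono_mul_left_of_pos two_pos)).injective
  obtain ⟨x, hx, hxF⟩ := Finset.exists_mem_notMem_of_card_lt_card
    (t := (Finset.range r).image fun t => q t + 2 * t) (s := F)
    (by rwa [Finset.card_image_of_injective _ hinj, Finset.card_range])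
  obtain ⟨t, ht, rfl⟩ := Finset.mem_image.1 hx
  exact ⟨t, Finset.mem_range.1 ht, hxF⟩

theorem facetVertex_eq_of_Icc_subset {q : ℕ → ℕ} (hq : Monotone q) (hqm : ∀ t, q t ≤ m + 1)
    {a : ℕ} (h : ∀ y ∈ Finset.Icc a d, m + 1 + y ∈ facetOfSeq d q) {y : ℕ} (hay : a ≤ y)
    (hyd : y ≤ d) : facetVertex q y = m + 1 + y := by
  induction hk : d - y generalizing y with
  | zero =>
    obtain ⟨s, hs, hsy⟩ := mem_facetOfSeq.1 (h y (Finset.mem_Icc.2 ⟨hay, hyd⟩))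
    have := hqm (s / 2)
    have hs_eq : s = y := by rw [facetVertex] at hsy; omega
    rwa [hs_eq] at hsy
  | succ k ih =>
    obtain ⟨s, -, hsy⟩ := mem_facetOfSeq.1 (h y (Finset.mem_Icc.2 ⟨hay, hyd⟩))
    have hnext := ih (y := y + 1) (by omega) (by omega) (by omega)
    have hlt : s < y + 1 := (facetVertex_strictMono hq).lt_iff_lt.1 (by omega)
    have := hqm (s / 2)
    have hs_eq : s = y := by rw [facetVertex] at hsy; omega
    rwa [hs_eq] at hsy

theorem facetOfSeq_eq_of_erase_subset {t₀ : ℕ} (ht₀ : 2 * t₀ ≤ d) {q q' : ℕ → ℕ}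
    (hq : Monotone q) (hq' : Monotone q') (hqm : ∀ t, q t ≤ m + 1) (hqm' : ∀ t, q' t ≤ m + 1)
    (hqt₀ : q t₀ = m + 1) (heven : d = 2 * t₀ → q' t₀ = m + 1)
    (h : (facetOfSeq d q).erase (q t₀ + 2 * t₀) ⊆ facetOfSeq d q') :
    facetOfSeq d q' = facetOfSeq d q := by
  have hfinal : ∀ y ∈ Finset.Icc (2 * t₀ + 1) d, m + 1 + y ∈ facetOfSeq d q' := by
    intro y hy
    rw [Finset.mem_Icc] at hy
    refine h (Finset.mem_erase.2 ⟨by omega, mem_facetOfSeq.2 ⟨y, hy.2, ?_⟩⟩)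
    have := hq (show t₀ ≤ y / 2 by omega)
    have := hqm (y / 2)
    rw [facetVertex]
    omega
  have hqt₀' : q' t₀ = m + 1 := by
    rcases ht₀.eq_or_lt with hd | hd
    · exact heven hd.symm
    · have := facetVertex_eq_of_Icc_subset hq' hqm' hfinal le_rfl hd
      rw [facetVertex_two_mul_add_one] at this
      omega
  refine (Finset.eq_of_subset_of_card_le (fun x hx => ?_) ?_).symm
  · by_cases hx₀ : x = q t₀ + 2 * t₀
    · rw [hx₀, hqt₀, ← hqt₀']
      exact two_mul_vertex_mem ht₀
    · exact h (Finset.mem_erase.2 ⟨hx₀, hx⟩)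
  · rw [card_facetOfSeq hq, card_facetOfSeq hq']

theorem mem_complexBoundary_of_nthIndex_eq (hU : ShiftClosed m U)
    (hdeg : ∀ u ∈ U, 2 * u.card ≤ d + 1) {u : Multiset ℕ} (hu : u ∈ U) {t₀ : ℕ} (ht₀ : 2 * t₀ ≤ d)
    (h : nthIndex (m + 1) u t₀ = m + 1) {F : Finset ℕ}
    (hF : F ⊆ (facetOfSeq d (nthIndex (m + 1) u)).erase (nthIndex (m + 1) u t₀ + 2 * t₀)) :
    F ∈ complexBoundary d (ballOfMonomials m d U) := by
  have hq := nthIndex_monotone (hU.le_of_mem hu)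
  refine ⟨_, hF, ⟨u, hu, Finset.erase_subset _ _⟩, ?_, Set.ncard_eq_one.2
    ⟨facetOfSeq d (nthIndex (m + 1) u), Set.eq_singleton_iff_unique_mem.2
      ⟨⟨facetOfSeq_mem_ballOfMonomials hu, card_facetOfSeq hq, Finset.erase_subset _ _⟩, ?_⟩⟩⟩
  · rw [Finset.card_erase_of_mem (two_mul_vertex_mem ht₀), card_facetOfSeq hq, Nat.add_sub_cancel]
  · rintro H ⟨hH, hHcard, hHsub⟩
    obtain ⟨u', hu', rfl⟩ := exists_eq_facetOfSeq_of_card_eq hU hH hHcard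
    have hm' := hU.le_of_mem hu'
    refine facetOfSeq_eq_of_erase_subset ht₀ hq (nthIndex_monotone hm')
      (nthIndex_le (hU.le_of_mem hu)) (nthIndex_le hm') h (fun hd => ?_) hHsub
    have := hdeg u' hu'
    exact nthIndex_of_card_le (by omega)

theorem mem_complexBoundary_of_card_le (hU : ShiftClosed m U)
    (hdeg : ∀ u ∈ U, 2 * u.card ≤ d + 1) {F : Finset ℕ} (hF : F ∈ ballOfMonomials m d U)
    (hc : F.card ≤ d / 2) : F ∈ complexBoundary d (ballOfMonomials m d U) := by
  let height (u : Multiset ℕ) : ℕ := ∑ t ∈ Finset.range (d / 2 + 1), nthIndex (m + 1) u t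
  have hbound : ∀ u ∈ U, height u ≤ (d / 2 + 1) * (m + 1) := fun u hu => by
    simpa using Finset.sum_le_card_nsmul (Finset.range (d / 2 + 1)) _ _
      fun t _ => nthIndex_le (hU.le_of_mem hu) t
  -- A facet containing `F` of maximal height can no longer be raised off `F`.
  obtain ⟨u, ⟨hu, hsub⟩, hmax⟩ :=
    (measure fun u => (d / 2 + 1) * (m + 1) - height u).wf.has_min
      {u | u ∈ U ∧ F ⊆ facetOfSeq d (nthIndex (m + 1) u)} hF
  have hq := nthIndex_monotone (hU.le_of_mem hu)
  obtain ⟨t₀, ht₀, hnot⟩ := exists_two_mul_vertex_notMem hq (Nat.lt_succ_of_le hc)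
  have hFe : F ⊆ (facetOfSeq d (nthIndex (m + 1) u)).erase (nthIndex (m + 1) u t₀ + 2 * t₀) :=
    Finset.subset_erase.2 ⟨hsub, hnot⟩
  rcases (nthIndex_le (hU.le_of_mem hu) t₀).eq_or_lt with hlast | hlt
  · exact mem_complexBoundary_of_nthIndex_eq hU hdeg hu (by omega) hlast hFe
  · obtain ⟨u', hu', hraise⟩ := hU.exists_raised_facet (d := d) hu (Nat.lt_succ_iff.1 hlt)
    have hheight : height u < height u' := by
      refine Finset.sum_lt_sum (fun t ht => ?_) ⟨t₀, Finset.mem_range.2 ht₀, ?_⟩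
      · rw [hraise t (Finset.mem_range.1 ht)]
        exact le_raiseFrom _ t₀ t
      · rw [hraise t₀ ht₀, raiseFrom, if_pos ⟨le_rfl, rfl⟩]
        exact Nat.lt_succ_self _
    have := hbound u' hu'
    refine absurd ?_ (hmax u' ⟨hu', ?_⟩)
    · exact Nat.sub_lt_sub_left (by omega) hheight
    · rw [facetOfSeq_congr hraise]
      exact hFe.trans (facetOfSeq_erase_subset_raiseFrom hq t₀)

end LowDegreeFaces

section MiddleDegreeNonfaces

variable {m d : ℕ} {U : Set (Multiset ℕ)} {G : Finset ℕ} {u u' : Multiset ℕ}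

theorem facetOfSeq_eq_of_ncard_eq_one (hU : ShiftClosed m U)
    (h : {H | H ∈ ballOfMonomials m d U ∧ H.card = d + 1 ∧ G ⊆ H}.ncard = 1)
    (hu : u ∈ U) (hG : G ⊆ facetOfSeq d (nthIndex (m + 1) u))
    (hu' : u' ∈ U) (hG' : G ⊆ facetOfSeq d (nthIndex (m + 1) u')) :
    facetOfSeq d (nthIndex (m + 1) u) = facetOfSeq d (nthIndex (m + 1) u') :=
  (Set.ncard_le_one_iff (Set.finite_of_ncard_ne_zero (by rw [h]; exact one_ne_zero))).1 h.le
    ⟨facetOfSeq_mem_ballOfMonomials hu, card_facetOfSeq (nthIndex_monotone (hU.le_of_mem hu)), hG⟩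
    ⟨facetOfSeq_mem_ballOfMonomials hu', card_facetOfSeq (nthIndex_monotone (hU.le_of_mem hu')),
      hG'⟩

theorem ncard_ne_one_of_subset_erase_even (hU : ShiftClosed m U) (hu : u ∈ U) {t₀ : ℕ}
    (ht₀ : 2 * t₀ ≤ d) (h : nthIndex (m + 1) u t₀ ≤ m)
    (hG : G ⊆ (facetOfSeq d (nthIndex (m + 1) u)).erase (nthIndex (m + 1) u t₀ + 2 * t₀)) :
    {H | H ∈ ballOfMonomials m d U ∧ H.card = d + 1 ∧ G ⊆ H}.ncard ≠ 1 := by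
  intro hone
  have hq := nthIndex_monotone (hU.le_of_mem hu)
  obtain ⟨u', hu', hraise⟩ := hU.exists_raised_facet (d := d) hu h
  have heq := facetOfSeq_eq_of_ncard_eq_one hU hone hu (hG.trans (Finset.erase_subset _ _)) hu' (by
    rw [facetOfSeq_congr hraise]
    exact hG.trans (facetOfSeq_erase_subset_raiseFrom hq t₀))
  rw [facetOfSeq_congr hraise] at heq
  exact notMem_facetOfSeq_raiseFrom hq t₀ (heq ▸ two_mul_vertex_mem ht₀)

theorem ncard_ne_one_of_subset_erase_odd (hU : ShiftClosed m U) (hu : u ∈ U) {t₀ : ℕ}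
    (ht₀ : 2 * t₀ + 1 ≤ d) (hpos : 0 < nthIndex (m + 1) u t₀) {v : Multiset ℕ} (hv : v ∈ U)
    (hvu : ∀ t < d / 2 + 1, nthIndex (m + 1) v t ≤ lowerUpTo (nthIndex (m + 1) u) t₀ t)
    (hG : G ⊆ (facetOfSeq d (nthIndex (m + 1) u)).erase (nthIndex (m + 1) u t₀ + 2 * t₀ + 1)) :
    {H | H ∈ ballOfMonomials m d U ∧ H.card = d + 1 ∧ G ⊆ H}.ncard ≠ 1 := by
  intro hone
  have hq := nthIndex_monotone (hU.le_of_mem hu)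
  obtain ⟨u', hu', hlower⟩ := hU.exists_nthIndex_eq hv (lowerUpTo_monotone hq t₀)
    (fun t => (lowerUpTo_le _ t₀ t).trans (nthIndex_le (hU.le_of_mem hu) t)) hvu
  have heq := facetOfSeq_eq_of_ncard_eq_one hU hone hu (hG.trans (Finset.erase_subset _ _)) hu' (by
    rw [facetOfSeq_congr hlower]
    exact hG.trans (facetOfSeq_erase_subset_lowerUpTo hq ht₀ hpos))
  rw [facetOfSeq_congr hlower] at heq
  exact notMem_facetOfSeq_lowerUpTo hq hpos (heq ▸ two_mul_add_one_vertex_mem ht₀)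

/-- The facet consists of `r` pairs, and the `r` vertices lie in different ones. -/
theorem eq_facetVertex_of_mem_facetOfSeq {r : ℕ} (hr : 2 * r = d + 1) {a q : ℕ → ℕ}
    (ha : Monotone a) (hq : Monotone q) (h : ∀ t < r, a t + 2 * t + 1 ∈ facetOfSeq d q) {t : ℕ}
    (ht : t < r) : a t + 2 * t + 1 = q t + 2 * t ∨ a t + 2 * t + 1 = q t + 2 * t + 1 := by
  obtain ⟨s, hs, hmono⟩ := exists_positions_of_mem_facetOfSeq ha hq h
  obtain ⟨-, hpos⟩ := hs t ht
  have hlow := add_sub_le_of_strictMonoOn_Iio hmono t.zero_le ht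
  have hupp := add_sub_le_of_strictMonoOn_Iio hmono (show t ≤ r - 1 by omega) (by omega)
  have := (hs (r - 1) (by omega)).1
  rw [← hpos]
  rcases (by omega : s t = 2 * t ∨ s t = 2 * t + 1) with heq | heq
  · exact Or.inl (heq ▸ facetVertex_two_mul q t)
  · exact Or.inr (heq ▸ facetVertex_two_mul_add_one q t)

theorem spread_one_notMem_complexBoundary (hU : ShiftClosed m U) (hu : u ∈ U)
    (hd : 2 * u.card = d + 1) :
    (spread 1 u).toFinset ∉ complexBoundary d (ballOfMonomials m d U) := by
  rintro ⟨G, hspread, ⟨v, hv, hG⟩, hGcard, hone⟩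
  have hqu := nthIndex_monotone (hU.le_of_mem hu)
  have hqv := nthIndex_monotone (hU.le_of_mem hv)
  have hmemG : ∀ t < u.card, nthIndex (m + 1) u t + 2 * t + 1 ∈ G := fun t ht =>
    hspread (Multiset.mem_toFinset.2 (mem_spread.2 ⟨t, ht, rfl⟩))
  have hpair := fun t (ht : t < u.card) => eq_facetVertex_of_mem_facetOfSeq hd hqu hqv
    (fun t ht => hG (hmemG t ht)) ht
  obtain ⟨e, he, heG⟩ := Finset.exists_mem_notMem_of_card_lt_card
    (show G.card < (facetOfSeq d (nthIndex (m + 1) v)).card by rw [card_facetOfSeq hqv]; omega)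
  have hGe : G ⊆ (facetOfSeq d (nthIndex (m + 1) v)).erase e := Finset.subset_erase.2 ⟨hG, heG⟩
  obtain ⟨y, hy, rfl⟩ := mem_facetOfSeq.1 he
  -- The missing vertex is the partner of the vertex of `spread 1 u` in its pair.
  rcases Nat.even_or_odd' y with ⟨t₀, rfl | rfl⟩
  · rw [facetVertex_two_mul] at hGe heG
    have ht₀ : t₀ < u.card := by omega
    have hum := hU.le_of_mem hu _ (nthIndex_mem (D := m + 1) ht₀)
    have hpartner := (hpair t₀ ht₀).resolve_left fun h => heG (h ▸ hmemG t₀ ht₀)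
    exact ncard_ne_one_of_subset_erase_even hU hv hy (by omega) hGe hone
  · rw [facetVertex_two_mul_add_one] at hGe heG
    have ht₀ : t₀ < u.card := by omega
    have hpartner := (hpair t₀ ht₀).resolve_right fun h => heG (h ▸ hmemG t₀ ht₀)
    refine ncard_ne_one_of_subset_erase_odd hU hv hy (by omega) hu (fun t ht => ?_) hGe hone
    have := hpair t (by omega)
    unfold lowerUpTo
    split_ifs with h
    · have := hqu h.1
      omega
    · omega

end MiddleDegreeNonfaces

/-! ### Degree reverse lexicographic leading monomials -/

open MvPolynomial

section DegRevLex

variable {σ : Type*} [LinearOrder σ] {u v w : σ →₀ ℕ}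

theorem degRevLexLT_iff : DegRevLexLT u v ↔ u.degree < v.degree ∨
    (u.degree = v.degree ∧ ∃ k, v k < u k ∧ ∀ l, k < l → u l = v l) := Iff.rfl

theorem degRevLexLT_trans (huv : DegRevLexLT u v) (hvw : DegRevLexLT v w) : DegRevLexLT u w := by
  rw [degRevLexLT_iff] at *
  rcases huv with huv | ⟨huv, k, hk, hk'⟩
  · exact Or.inl (hvw.elim huv.trans fun h => h.1 ▸ huv)
  rcases hvw with hvw | ⟨hvw, l, hl, hl'⟩
  · exact Or.inl (huv ▸ hvw)
  refine Or.inr ⟨huv.trans hvw, ?_⟩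
  rcases lt_trichotomy k l with h | rfl | h
  · exact ⟨l, by rwa [hk' l h], fun j hj => (hk' j (h.trans hj)).trans (hl' j hj)⟩
  · exact ⟨k, hl.trans hk, fun j hj => (hk' j hj).trans (hl' j hj)⟩
  · exact ⟨k, by rwa [← hl' k h], fun j hj => (hk' j hj).trans (hl' j (h.trans hj))⟩

theorem not_degRevLexLT_self (u : σ →₀ ℕ) : ¬ DegRevLexLT u u := by
  rw [degRevLexLT_iff]
  rintro (h | ⟨-, k, hk, -⟩)
  · exact lt_irrefl _ h
  · exact lt_irrefl _ hk

theorem degRevLexLT_add_left (h : DegRevLexLT u v) (w : σ →₀ ℕ) :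
    DegRevLexLT (w + u) (w + v) := by
  rw [degRevLexLT_iff, map_add, map_add] at *
  rcases h with h | ⟨h, k, hk, hk'⟩
  · exact Or.inl (by omega)
  · exact Or.inr ⟨by omega, k, by simpa using hk, fun l hl => by simp [hk' l hl]⟩

theorem degRevLexLT_or_gt_of_ne (h : u ≠ v) : DegRevLexLT u v ∨ DegRevLexLT v u := by
  rcases lt_trichotomy u.degree v.degree with hdeg | hdeg | hdeg
  · exact Or.inl (Or.inl hdeg)
  · have hne : (u.neLocus v).Nonempty := Finsupp.nonempty_neLocus_iff.2 h
    set k := (u.neLocus v).max' hne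
    have hk : u k ≠ v k := Finsupp.mem_neLocus.1 ((u.neLocus v).max'_mem hne)
    have hl : ∀ l, k < l → u l = v l := fun l hl => Finsupp.notMem_neLocus.1 fun hmem =>
      ((u.neLocus v).le_max' l hmem).not_gt hl
    rcases hk.lt_or_gt with hk | hk
    · exact Or.inr (Or.inr ⟨hdeg.symm, k, hk, fun l h => (hl l h).symm⟩)
    · exact Or.inl (Or.inr ⟨hdeg, k, hk, hl⟩)
  · exact Or.inr (Or.inl hdeg)

theorem exists_degRevLex_max (s : Finset (σ →₀ ℕ)) (hs : s.Nonempty) :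
    ∃ u ∈ s, ∀ v ∈ s, v ≠ u → DegRevLexLT v u := by
  induction hs using Finset.Nonempty.cons_induction with
  | singleton a => exact ⟨a, by simp, by simp⟩
  | cons a s ha _ ih =>
    obtain ⟨u, hu, hmax⟩ := ih
    rcases degRevLexLT_or_gt_of_ne (ne_of_mem_of_not_mem hu ha) with hua | hau
    · refine ⟨a, Finset.mem_cons_self _ _, fun v hv hva => ?_⟩
      have hv : v ∈ s := (Finset.mem_cons.1 hv).resolve_left hva
      rcases eq_or_ne v u with rfl | hvu
      · exact hua
      · exact degRevLexLT_trans (hmax v hv hvu) hua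
    · refine ⟨u, Finset.mem_cons_of_mem hu, fun v hv hvu => ?_⟩
      rcases Finset.mem_cons.1 hv with rfl | hv
      · exact hau
      · exact hmax v hv hvu

end DegRevLex

section LeadingExp

variable {σ K : Type*} [LinearOrder σ] [Field K]

/-- `x^u` is the leading monomial of `f` in the degree reverse lexicographic order. -/
def IsLeadingExp (f : MvPolynomial σ K) (u : σ →₀ ℕ) : Prop :=
  u ∈ f.support ∧ ∀ v ∈ f.support, v ≠ u → DegRevLexLT v u

theorem exists_isLeadingExp {f : MvPolynomial σ K} (hf : f ≠ 0) : ∃ u, IsLeadingExp f u :=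
  exists_degRevLex_max f.support (support_nonempty.2 hf)

theorem IsLeadingExp.monomial_mul {f : MvPolynomial σ K} {u : σ →₀ ℕ} (h : IsLeadingExp f u)
    (w : σ →₀ ℕ) : IsLeadingExp (monomial w 1 * f) (w + u) := by
  constructor
  · rw [mem_support_iff, coeff_monomial_mul, one_mul]
    exact mem_support_iff.1 h.1
  · intro v hv hne
    rw [mem_support_iff, coeff_monomial_mul', ite_ne_right_iff, one_mul] at hv
    obtain ⟨v', rfl⟩ := exists_add_of_le hv.1
    rw [add_tsub_cancel_left] at hv
    exact degRevLexLT_add_left (h.2 v' (mem_support_iff.2 hv.2) (ne_of_apply_ne _ hne)) w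

theorem monomial_mem_initialIdeal_iff {I : Ideal (MvPolynomial σ K)} {u : σ →₀ ℕ} :
    monomial u (1 : K) ∈ initialIdeal I ↔ ∃ f ∈ I, IsLeadingExp f u := by
  constructor
  · intro h
    have hgens : {m | ∃ f ∈ I, ∃ u ∈ f.support, m = monomial u (1 : K) ∧
        ∀ v ∈ f.support, v ≠ u → DegRevLexLT v u} =
        (fun s => monomial s (1 : K)) '' {s | ∃ f ∈ I, IsLeadingExp f s} := by
      ext m
      constructor
      · rintro ⟨f, hf, u, hu, rfl, h⟩; exact ⟨u, ⟨f, hf, hu, h⟩, rfl⟩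
      · rintro ⟨u, ⟨f, hf, hu, h⟩, rfl⟩; exact ⟨f, hf, u, hu, rfl, h⟩
    rw [initialIdeal, hgens, mem_ideal_span_monomial_image] at h
    obtain ⟨s, ⟨f, hf, hlead⟩, hsu⟩ := h u (by simp)
    obtain ⟨w, rfl⟩ := exists_add_of_le hsu
    exact ⟨monomial w 1 * f, I.mul_mem_left _ hf, add_comm s w ▸ hlead.monomial_mul w⟩
  · rintro ⟨f, hf, hu, h⟩
    exact Ideal.subset_span ⟨f, hf, u, hu, rfl, h⟩

theorem linearIndependent_of_isLeadingExp {ι : Type*} [Finite ι] {f : ι → MvPolynomial σ K}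
    {u : ι → σ →₀ ℕ} (hu : Function.Injective u) (hf : ∀ i, IsLeadingExp (f i) (u i)) :
    LinearIndependent K f := by
  classical
  cases nonempty_fintype ι
  rw [Fintype.linearIndependent_iff]
  intro g hg
  by_contra! hne
  obtain ⟨i, hi⟩ := hne
  obtain ⟨_, hmem, hmax⟩ := exists_degRevLex_max ((Finset.univ.filter fun i => g i ≠ 0).image u)
    ⟨u i, Finset.mem_image_of_mem u (by simpa using hi)⟩
  obtain ⟨j, hj, rfl⟩ := Finset.mem_image.1 hmem
  have hzero : ∀ i ≠ j, g i * coeff (u j) (f i) = 0 := by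
    intro i hij
    rw [mul_eq_zero, or_iff_not_imp_left, ← notMem_support_iff]
    intro hgi hsupp
    have hlt := hmax (u i) (Finset.mem_image_of_mem u (by simpa using hgi)) (hu.ne hij)
    exact not_degRevLexLT_self _ (degRevLexLT_trans hlt ((hf i).2 _ hsupp (hu.ne hij.symm)))
  have hcoeff : ∑ i, g i * coeff (u j) (f i) = 0 := by
    simpa only [coeff_sum, coeff_smul, smul_eq_mul, coeff_zero] using congrArg (coeff (u j)) hg
  rw [Finset.sum_eq_single j (fun i _ => hzero i) (by simp)] at hcoeff
  exact mul_ne_zero (Finset.mem_filter.1 hj).2 (mem_support_iff.1 (hf j).1) hcoeff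

theorem card_le_finrank_of_isLeadingExp {W : Submodule K (MvPolynomial σ K)} [Module.Finite K W]
    {E : Finset (σ →₀ ℕ)} (hE : ∀ u ∈ E, ∃ f ∈ W, IsLeadingExp f u) :
    E.card ≤ Module.finrank K W := by
  choose! f hfW hf using hE
  have hli : LinearIndependent K fun u : E => (⟨f u, hfW u u.2⟩ : W) :=
    .of_comp W.subtype (linearIndependent_of_isLeadingExp Subtype.val_injective fun u => hf u u.2)
  simpa using hli.fintype_card_le_finrank

theorem finrank_le_card_of_isLeadingExp {W : Submodule K (MvPolynomial σ K)}
    {E : Finset (σ →₀ ℕ)} (hE : ∀ f ∈ W, ∀ u, IsLeadingExp f u → u ∈ E) :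
    Module.finrank K W ≤ E.card := by
  have hinj : Function.Injective
      ((LinearMap.pi fun u : E => lcoeff K (u : σ →₀ ℕ)).comp W.subtype) := by
    rw [← LinearMap.ker_eq_bot, LinearMap.ker_eq_bot']
    intro f hf
    by_contra hne
    obtain ⟨u, hu⟩ := exists_isLeadingExp (Subtype.coe_ne_coe.2 hne)
    exact mem_support_iff.1 hu.1 (congrFun hf ⟨u, hE f f.2 u hu⟩)
  simpa using LinearMap.finrank_le_finrank_of_injective hinj

end LeadingExp

section ExpToMultiset

variable {N : ℕ} {u v : Multiset ℕ}

/-- The monomial with exponent vector `e`, encoded as the multiset of its variable indices: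
the inverse of `multisetToExp N` on multisets with entries in `[1, N]`. -/
noncomputable def expToMultiset (e : Fin N →₀ ℕ) : Multiset ℕ :=
  (Finsupp.toMultiset e).map fun a : Fin N => (a : ℕ) + 1

theorem multisetToExp_apply (N : ℕ) (w : Multiset ℕ) (a : Fin N) :
    multisetToExp N w a = w.count ((a : ℕ) + 1) := rfl

theorem multisetToExp_add (N : ℕ) (u v : Multiset ℕ) :
    multisetToExp N (u + v) = multisetToExp N u + multisetToExp N v := by
  ext a
  simp [multisetToExp_apply]

theorem multisetToExp_expToMultiset (e : Fin N →₀ ℕ) : multisetToExp N (expToMultiset e) = e := by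
  ext a
  rw [multisetToExp_apply, expToMultiset,
    Multiset.count_map_eq_count' (fun a : Fin N => (a : ℕ) + 1) _
      (fun a b h => Fin.ext (by simpa using h)), Finsupp.count_toMultiset]

theorem mem_Icc_of_mem_expToMultiset (e : Fin N →₀ ℕ) :
    ∀ x ∈ expToMultiset e, x ∈ Finset.Icc 1 N := by
  intro x hx
  obtain ⟨a, -, rfl⟩ := Multiset.mem_map.1 hx
  exact Finset.mem_Icc.2 (by omega)

theorem multisetToExp_injOn (hu : ∀ x ∈ u, x ∈ Finset.Icc 1 N) (hv : ∀ x ∈ v, x ∈ Finset.Icc 1 N)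
    (h : multisetToExp N u = multisetToExp N v) : u = v := by
  ext x
  by_cases hx : x ∈ Finset.Icc 1 N
  · rw [Finset.mem_Icc] at hx
    have := DFunLike.congr_fun h ⟨x - 1, by omega⟩
    simpa only [multisetToExp_apply, Nat.sub_add_cancel hx.1] using this
  · rw [Multiset.count_eq_zero.2 (mt (hu x) hx), Multiset.count_eq_zero.2 (mt (hv x) hx)]

theorem expToMultiset_multisetToExp (hu : ∀ x ∈ u, x ∈ Finset.Icc 1 N) :
    expToMultiset (multisetToExp N u) = u :=
  multisetToExp_injOn (mem_Icc_of_mem_expToMultiset _) hu (multisetToExp_expToMultiset _)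

theorem card_expToMultiset (e : Fin N →₀ ℕ) : (expToMultiset e).card = e.degree := by
  rw [expToMultiset, Multiset.card_map, Finsupp.card_toMultiset]
  rfl

theorem degree_multisetToExp (hu : ∀ x ∈ u, x ∈ Finset.Icc 1 N) :
    (multisetToExp N u).degree = u.card := by
  rw [← card_expToMultiset, expToMultiset_multisetToExp hu]

/-- The one specific property of the reverse lexicographic order on which the argument rests. -/
theorem IsLeadingExp.le_of_mem {K : Type*} [Field K] {f : MvPolynomial (Fin N) K} {k c : ℕ}
    (hlead : IsLeadingExp f (multisetToExp N v)) (hv : v ∈ monomialsOn N k)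
    (hu : u ∈ monomialsOn N k) (huc : ∀ x ∈ u, x ≤ c) (huf : multisetToExp N u ∈ f.support) :
    ∀ x ∈ v, x ≤ c := by
  rw [mem_monomialsOn] at hv hu
  intro x hx
  by_contra hxc
  have hx1 := Finset.mem_Icc.1 (hv.1 x hx)
  have hne : multisetToExp N u ≠ multisetToExp N v := fun h =>
    hxc (huc x (by rwa [multisetToExp_injOn hu.1 hv.1 h]))
  rcases degRevLexLT_iff.1 (hlead.2 _ huf hne) with h | ⟨-, a, ha, ha'⟩
  · rw [degree_multisetToExp hu.1, degree_multisetToExp hv.1] at h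
    omega
  · rw [multisetToExp_apply, multisetToExp_apply] at ha
    have hac : (a : ℕ) + 1 ≤ c := huc _ (Multiset.count_pos.1 (by omega))
    have hcount : u.count x = v.count x := by
      simpa only [multisetToExp_apply, Nat.sub_add_cancel hx1.1] using
        ha' ⟨x - 1, by omega⟩ (Fin.lt_def.2 (by simp only; omega))
    exact hxc (huc x (Multiset.count_pos.1 (hcount ▸ Multiset.count_pos.2 hx)))

end ExpToMultiset

/-! ### Products of linear forms with independent coefficients -/

section MonomialsOn

variable {m k N : ℕ} {u : Multiset ℕ}

theorem monomialsOn_zero (N : ℕ) : monomialsOn N 0 = {0} := by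
  ext u
  rw [mem_monomialsOn, Multiset.card_eq_zero, Finset.mem_singleton, and_iff_right_iff_imp]
  rintro rfl
  simp

theorem monomialsOn_zero_succ (k : ℕ) : monomialsOn 0 (k + 1) = ∅ := by
  refine Finset.eq_empty_of_forall_notMem fun u hu => ?_
  rw [mem_monomialsOn] at hu
  obtain ⟨x, hx⟩ := Multiset.card_pos_iff_exists_mem.1 (by omega : 0 < u.card)
  simpa using hu.1 x hx

theorem monomialsOn_mono {N' : ℕ} (h : N ≤ N') : monomialsOn N k ⊆ monomialsOn N' k := by
  intro u hu
  rw [mem_monomialsOn] at *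
  exact ⟨fun x hx => Finset.Icc_subset_Icc_right h (hu.1 x hx), hu.2⟩

theorem le_of_mem_monomialsOn (hu : u ∈ monomialsOn N k) : ∀ x ∈ u, x ≤ N :=
  fun x hx => (Finset.mem_Icc.1 ((mem_monomialsOn.1 hu).1 x hx)).2

theorem mem_monomialsOn_of_le (hu : u ∈ monomialsOn N k) (hm : ∀ x ∈ u, x ≤ m) :
    u ∈ monomialsOn m k := by
  rw [mem_monomialsOn] at *
  exact ⟨fun x hx => Finset.mem_Icc.2 ⟨(Finset.mem_Icc.1 (hu.1 x hx)).1, hm x hx⟩, hu.2⟩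

theorem cons_mem_monomialsOn {a : ℕ} :
    a ::ₘ u ∈ monomialsOn N (k + 1) ↔ a ∈ Finset.Icc 1 N ∧ u ∈ monomialsOn N k := by
  rw [mem_monomialsOn, mem_monomialsOn, Multiset.forall_mem_cons, Multiset.card_cons,
    Nat.add_right_cancel_iff, and_assoc]

theorem succ_cons_mem_monomialsOn :
    (m + 1) ::ₘ u ∈ monomialsOn (m + 1) (k + 1) ↔ u ∈ monomialsOn (m + 1) k := by
  rw [cons_mem_monomialsOn, and_iff_right (by simp)]

theorem succ_notMem_of_mem_monomialsOn (hu : u ∈ monomialsOn m k) : m + 1 ∉ u :=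
  fun h => (le_of_mem_monomialsOn hu _ h).not_gt m.lt_succ_self

theorem mem_monomialsOn_succ_succ_iff : u ∈ monomialsOn (m + 1) (k + 1) ↔
    u ∈ monomialsOn m (k + 1) ∨ ∃ v ∈ monomialsOn (m + 1) k, (m + 1) ::ₘ v = u := by
  constructor
  · intro hu
    by_cases hmem : m + 1 ∈ u
    · obtain ⟨v, rfl⟩ := Multiset.exists_cons_of_mem hmem
      exact Or.inr ⟨v, succ_cons_mem_monomialsOn.1 hu, rfl⟩
    · refine Or.inl (mem_monomialsOn_of_le hu fun x hx => Nat.lt_succ_iff.1 ?_)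
      exact (le_of_mem_monomialsOn hu x hx).lt_of_ne (ne_of_mem_of_not_mem hx hmem)
  · rintro (hu | ⟨v, hv, rfl⟩)
    · exact monomialsOn_mono m.le_succ hu
    · exact succ_cons_mem_monomialsOn.2 hv

theorem sum_monomialsOn_succ_succ {A : Type*} [AddCommMonoid A] (m k : ℕ) (f : Multiset ℕ → A) :
    ∑ u ∈ monomialsOn (m + 1) (k + 1), f u =
      ∑ u ∈ monomialsOn m (k + 1), f u + ∑ u ∈ monomialsOn (m + 1) k, f ((m + 1) ::ₘ u) := by
  classical
  have hdisj : Disjoint (monomialsOn m (k + 1))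
      ((monomialsOn (m + 1) k).image ((m + 1) ::ₘ ·)) := by
    rw [Finset.disjoint_left]
    intro u hu hu'
    obtain ⟨v, -, rfl⟩ := Finset.mem_image.1 hu'
    exact succ_notMem_of_mem_monomialsOn hu (Multiset.mem_cons_self _ _)
  have hunion : monomialsOn (m + 1) (k + 1) =
      monomialsOn m (k + 1) ∪ (monomialsOn (m + 1) k).image ((m + 1) ::ₘ ·) := by
    ext u
    rw [Finset.mem_union, Finset.mem_image, mem_monomialsOn_succ_succ_iff]
  rw [hunion, Finset.sum_union hdisj,
    Finset.sum_image fun a _ b _ h => (Multiset.cons_inj_right _).1 h]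

theorem multisetToExp_zero (N : ℕ) : multisetToExp N 0 = 0 := by
  ext a
  simp [multisetToExp_apply]

theorem multisetToExp_succ_cons (hm : m < N) (u : Multiset ℕ) :
    multisetToExp N ((m + 1) ::ₘ u) = Finsupp.single ⟨m, hm⟩ 1 + multisetToExp N u := by
  ext a
  rw [Finsupp.add_apply, multisetToExp_apply, multisetToExp_apply, Multiset.count_cons,
    Finsupp.single_apply, add_comm]
  congr 1
  simp [Fin.ext_iff, eq_comm]

end MonomialsOn

section LinearForms

variable {σ R R' : Type*} [Fintype σ] [CommRing R] [CommRing R']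

/-- The linear form `∑ i, v i * X i` with coefficient vector `v`. -/
noncomputable def linForm : (σ → R) →ₗ[R] MvPolynomial σ R :=
  Fintype.linearCombination R X

/-- The image of the monomial `w` under the substitution of the linear form with coefficient
vector `c a` for the variable with index `a`. -/
noncomputable def linFormProd (c : ℕ → σ → R) (w : Multiset ℕ) : MvPolynomial σ R :=
  (w.map fun a => linForm (c a)).prod

theorem linForm_apply (v : σ → R) : linForm v = ∑ i, C (v i) * X i := by
  simp only [linForm, Fintype.linearCombination_apply, smul_eq_C_mul]

theorem linForm_single_one [DecidableEq σ] (i : σ) :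
    linForm (Pi.single i 1) = (X i : MvPolynomial σ R) := by
  rw [linForm, Fintype.linearCombination_apply_single, one_smul]

theorem map_linForm (f : R →+* R') (v : σ → R) : map f (linForm v) = linForm (f ∘ v) := by
  simp [linForm_apply]

theorem map_linFormProd (f : R →+* R') (c : ℕ → σ → R) (w : Multiset ℕ) :
    map f (linFormProd c w) = linFormProd (fun a => f ∘ c a) w := by
  simp only [linFormProd, map_multiset_prod, Multiset.map_map, Function.comp_apply, map_linForm]

theorem linFormProd_cons (c : ℕ → σ → R) (a : ℕ) (w : Multiset ℕ) :
    linFormProd c (a ::ₘ w) = linForm (c a) * linFormProd c w := by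
  simp [linFormProd]

theorem linFormProd_congr {c c' : ℕ → σ → R} {w : Multiset ℕ} (h : ∀ a ∈ w, c a = c' a) :
    linFormProd c w = linFormProd c' w := by
  rw [linFormProd, linFormProd, Multiset.map_congr rfl fun a ha => by rw [h a ha]]

end LinearForms

section CoeffIndep

variable {N : ℕ} {K : Type*} [Field K] {m k : ℕ} {f g : Multiset ℕ → MvPolynomial (Fin N) K}

/-- The coefficients of a polynomial at the monomials of degree `k` in the first `m` variables. -/
noncomputable def restrictCoeffs (N : ℕ) (K : Type*) [Field K] (m k : ℕ) :
    MvPolynomial (Fin N) K →ₗ[K] (monomialsOn m k → K) :=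
  LinearMap.pi fun w => lcoeff K (multisetToExp N w)

theorem restrictCoeffs_apply (p : MvPolynomial (Fin N) K) (w : monomialsOn m k) :
    restrictCoeffs N K m k p w = coeff (multisetToExp N w) p := rfl

/-- The polynomials `f u`, for `u` a monomial of degree `k` in the first `m` variables, have
linearly independent vectors of coefficients at these same monomials: the square matrix of
coefficients is nonsingular. -/
def CoeffIndep (m k : ℕ) (f : Multiset ℕ → MvPolynomial (Fin N) K) : Prop :=
  LinearIndependent K fun u : monomialsOn m k => restrictCoeffs N K m k (f u)

theorem coeffIndep_iff : CoeffIndep m k f ↔ ∀ a : Multiset ℕ → K,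
    (∀ w ∈ monomialsOn m k, ∑ u ∈ monomialsOn m k, a u * coeff (multisetToExp N w) (f u) = 0) →
      ∀ u ∈ monomialsOn m k, a u = 0 := by
  rw [CoeffIndep, Fintype.linearIndependent_iff]
  constructor
  · intro h a ha u hu
    refine h (fun u => a u) (funext fun w => ?_) ⟨u, hu⟩
    rw [Finset.sum_apply, Pi.zero_apply, ← ha w w.2]
    exact Finset.sum_coe_sort (monomialsOn m k) fun u => a u * coeff (multisetToExp N w) (f u)
  · classical
    intro h a ha u
    have hzero := h (fun u => if hu : u ∈ monomialsOn m k then a ⟨u, hu⟩ else 0) ?_ u u.2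
    · simpa using hzero
    · intro w hw
      rw [← Finset.sum_coe_sort]
      simpa [restrictCoeffs_apply] using congrFun ha ⟨w, hw⟩

theorem coeffIndep_congr (h : ∀ u ∈ monomialsOn m k, f u = g u) :
    CoeffIndep m k f ↔ CoeffIndep m k g := by
  have hfg : (fun u : monomialsOn m k => restrictCoeffs N K m k (f u)) =
      fun u : monomialsOn m k => restrictCoeffs N K m k (g u) := funext fun u => by rw [h u u.2]
  rw [CoeffIndep, CoeffIndep, hfg]

theorem CoeffIndep.of_mem_span (hf : CoeffIndep m k f)
    (h : ∀ u ∈ monomialsOn m k, f u ∈ Submodule.span K (g '' monomialsOn m k)) :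
    CoeffIndep m k g := by
  have hcard : Fintype.card (monomialsOn m k) = Module.finrank K (monomialsOn m k → K) := by simp
  refine linearIndependent_of_top_le_span_of_card_eq_finrank ?_ hcard
  rw [← hf.span_eq_top_of_card_eq_finrank' hcard, Submodule.span_le]
  rintro _ ⟨u, rfl⟩
  have hspan := Submodule.mem_map_of_mem (f := restrictCoeffs N K m k) (h u u.2)
  rw [Submodule.map_span] at hspan
  refine Submodule.span_mono ?_ hspan
  rintro _ ⟨_, ⟨v, hv, rfl⟩, rfl⟩
  exact ⟨⟨v, hv⟩, rfl⟩

theorem exists_eval_ne_zero_iff_coeffIndep {τ : Type*} (m k : ℕ)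
    (f : Multiset ℕ → MvPolynomial (Fin N) (MvPolynomial τ K)) :
    ∃ p : MvPolynomial τ K, ∀ x : τ → K,
      eval x p ≠ 0 ↔ CoeffIndep m k fun u => map (eval x) (f u) := by
  classical
  refine ⟨(Matrix.of fun u w : monomialsOn m k => coeff (multisetToExp N w) (f u)).det,
    fun x => ?_⟩
  have hrows : (fun u : monomialsOn m k => restrictCoeffs N K m k (map (eval x) (f u))) =
      ((eval x).mapMatrix
        (Matrix.of fun u w : monomialsOn m k => coeff (multisetToExp N w) (f u))).row := by
    funext u w
    simp [restrictCoeffs_apply, coeff_map, Matrix.row]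
  rw [CoeffIndep, hrows, Matrix.linearIndependent_rows_iff_isUnit, RingHom.map_det,
    Matrix.isUnit_iff_isUnit_det, isUnit_iff_ne_zero]

theorem coeffIndep_zero (hf : f 0 = 1) : CoeffIndep m 0 f := by
  rw [coeffIndep_iff, monomialsOn_zero]
  intro a ha
  simpa [hf, multisetToExp_zero] using ha

theorem coeffIndep_zero_succ : CoeffIndep 0 (k + 1) f := by
  simp [coeffIndep_iff, monomialsOn_zero_succ]

theorem exists_eval_ne_zero [Infinite K] {τ : Type*} {p : MvPolynomial τ K} (hp : p ≠ 0) :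
    ∃ x, eval x p ≠ 0 := by
  by_contra! h
  exact hp (MvPolynomial.funext fun x => by rw [h x, map_zero])

end CoeffIndep

section SpreadBy

variable {A : Set (Multiset ℕ)} {u : Multiset ℕ}

open Classical in
/-- The spread of `u`, moved one step further if `u ∈ A`. For `A = U` and `u` of degree
`⌊d/2⌋ + 1` it is a monomial in the Stanley–Reisner ideal of the sphere. -/
noncomputable def spreadBy (A : Set (Multiset ℕ)) (u : Multiset ℕ) : Multiset ℕ :=
  spread (if u ∈ A then 1 else 0) u

theorem spreadBy_of_mem (hu : u ∈ A) : spreadBy A u = spread 1 u := by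
  rw [spreadBy, if_pos hu]

theorem spreadBy_of_notMem (hu : u ∉ A) : spreadBy A u = spread 0 u := by
  rw [spreadBy, if_neg hu]

theorem lt_of_mem_spread {e b : ℕ} (hu : ∀ x ∈ u, x ≤ b) {y : ℕ} (hy : y ∈ spread e u) :
    y + 2 ≤ b + 2 * u.card + e := by
  obtain ⟨t, ht, rfl⟩ := (mem_spread (D := 0)).1 hy
  have := hu _ (nthIndex_mem (D := 0) ht)
  omega

end SpreadBy

section Interpolation

variable {N m k : ℕ} {A : Set (Multiset ℕ)} {u : Multiset ℕ}

open Classical in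
/-- For `e = 0` this family is `x_{m+1}` times the family of spread products for the monomials
divisible by `x_{m+1}`, and the family of spread products for the others. For `e ≠ 0` and a suitable
`ℓ` it lies in the span of a single family of spread products; see
`interpolation_mem_span_extendForms`. -/
noncomputable def interpolation {R : Type*} [CommRing R] (hm : m < N) (A : Set (Multiset ℕ))
    (c : ℕ → Fin N → R) (ℓ : Fin N → R) (e : R) (u : Multiset ℕ) : MvPolynomial (Fin N) R :=
  if m + 1 ∈ u then
    (X ⟨m, hm⟩ + C (if u ∈ A then e else 0) * linForm ℓ) *
      linFormProd c (spreadBy (((m + 1) ::ₘ ·) ⁻¹' A) (u.erase (m + 1)))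
  else linFormProd c (spreadBy A u)

section CommRing

variable {R R' : Type*} [CommRing R] [CommRing R'] (hm : m < N) (c : ℕ → Fin N → R)
  (ℓ : Fin N → R) (e : R)

theorem interpolation_of_notMem (hu : m + 1 ∉ u) :
    interpolation hm A c ℓ e u = linFormProd c (spreadBy A u) :=
  if_neg hu

theorem interpolation_succ_cons_of_mem (hu : (m + 1) ::ₘ u ∈ A) :
    interpolation hm A c ℓ e ((m + 1) ::ₘ u) =
      (X ⟨m, hm⟩ + C e * linForm ℓ) * linFormProd c (spread 1 u) := by
  rw [interpolation, if_pos (Multiset.mem_cons_self _ _), if_pos hu, Multiset.erase_cons_head,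
    spreadBy_of_mem (Set.mem_preimage.2 hu)]

theorem interpolation_succ_cons_of_notMem (hu : (m + 1) ::ₘ u ∉ A) :
    interpolation hm A c ℓ e ((m + 1) ::ₘ u) = X ⟨m, hm⟩ * linFormProd c (spread 0 u) := by
  rw [interpolation, if_pos (Multiset.mem_cons_self _ _), if_neg hu, Multiset.erase_cons_head,
    spreadBy_of_notMem (mt Set.mem_preimage.1 hu), C_0, zero_mul, add_zero]

theorem interpolation_zero_succ_cons (u : Multiset ℕ) :
    interpolation hm A c ℓ 0 ((m + 1) ::ₘ u) =
      X ⟨m, hm⟩ * linFormProd c (spreadBy (((m + 1) ::ₘ ·) ⁻¹' A) u) := by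
  rw [interpolation, if_pos (Multiset.mem_cons_self _ _), ite_self, Multiset.erase_cons_head, C_0,
    zero_mul, add_zero]

theorem map_interpolation (f : R →+* R') (u : Multiset ℕ) :
    map f (interpolation hm A c ℓ e u) =
      interpolation hm A (fun a => f ∘ c a) (f ∘ ℓ) (f e) u := by
  unfold interpolation
  split_ifs <;> simp [map_linForm, map_linFormProd]

end CommRing

variable {K : Type*} [Field K]

theorem coeffIndep_interpolation_zero (hm : m < N) (c : ℕ → Fin N → K) (ℓ : Fin N → K)
    (h₁ : CoeffIndep (m + 1) k fun u => linFormProd c (spreadBy (((m + 1) ::ₘ ·) ⁻¹' A) u))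
    (h₂ : CoeffIndep m (k + 1) fun u => linFormProd c (spreadBy A u)) :
    CoeffIndep (m + 1) (k + 1) (interpolation hm A c ℓ 0) := by
  rw [coeffIndep_iff] at *
  intro a ha
  have hlow : ∀ u ∈ monomialsOn m (k + 1), a u = 0 := by
    refine h₂ a fun w hw => ?_
    have hcoeff := ha w (monomialsOn_mono m.le_succ hw)
    rw [sum_monomialsOn_succ_succ, Finset.sum_eq_zero (s := monomialsOn (m + 1) k),
      add_zero] at hcoeff
    · rw [← hcoeff]
      exact Finset.sum_congr rfl fun u hu => by
        rw [interpolation_of_notMem _ _ _ _ (succ_notMem_of_mem_monomialsOn hu)]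
    · intro u _
      rw [interpolation_zero_succ_cons, coeff_X_mul', if_neg, mul_zero]
      rw [Finsupp.notMem_support_iff, multisetToExp_apply]
      exact Multiset.count_eq_zero.2 (succ_notMem_of_mem_monomialsOn hw)
  have htop : ∀ u ∈ monomialsOn (m + 1) k, a ((m + 1) ::ₘ u) = 0 := by
    refine h₁ (fun u => a ((m + 1) ::ₘ u)) fun w hw => ?_
    have hcoeff := ha _ (succ_cons_mem_monomialsOn.2 hw)
    rw [sum_monomialsOn_succ_succ, Finset.sum_eq_zero (s := monomialsOn m (k + 1)) fun u hu => by
      rw [hlow u hu, zero_mul], zero_add] at hcoeff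
    rw [← hcoeff]
    exact Finset.sum_congr rfl fun u _ => by
      rw [interpolation_zero_succ_cons, multisetToExp_succ_cons hm, coeff_X_mul]
  intro u hu
  rcases mem_monomialsOn_succ_succ_iff.1 hu with hu | ⟨v, hv, rfl⟩
  · exact hlow u hu
  · exact htop v hv

theorem exists_coeffIndep_interpolation [Infinite K] (hm : m < N) (c : ℕ → Fin N → K)
    (ℓ : Fin N → K) (h : CoeffIndep (m + 1) (k + 1) (interpolation hm A c ℓ 0)) :
    ∃ e : K, e ≠ 0 ∧ CoeffIndep (m + 1) (k + 1) (interpolation hm A c ℓ e) := by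
  obtain ⟨p, hp⟩ := exists_eval_ne_zero_iff_coeffIndep (K := K) (τ := Unit) (m + 1) (k + 1)
    (interpolation hm A (fun a => C ∘ c a) (C ∘ ℓ) (X ()))
  have hp' : ∀ x : Unit → K, eval x p ≠ 0 ↔
      CoeffIndep (m + 1) (k + 1) (interpolation hm A c ℓ (x ())) := by
    intro x
    rw [hp]
    refine coeffIndep_congr fun u _ => ?_
    simp [map_interpolation, Function.comp_def]
  have hp0 : p ≠ 0 := by
    rintro rfl
    exact (hp' 0).2 h (map_zero _)
  obtain ⟨x, hx⟩ := exists_eval_ne_zero (mul_ne_zero hp0 (X_ne_zero (R := K) ()))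
  rw [map_mul, eval_X] at hx
  exact ⟨x (), right_ne_zero_of_mul hx, (hp' x).1 (left_ne_zero_of_mul hx)⟩

end Interpolation

section ExtendForms

variable {N : ℕ} {K : Type*} [Field K]

/-- The linear forms `c` with those from the `b`-th on replaced: the `b`-th one by the variable
`X i` and the later ones by `X i + e * c b`. -/
def extendForms (i : Fin N) (b : ℕ) (c : ℕ → Fin N → K) (e : K) (a : ℕ) : Fin N → K :=
  if a < b then c a else if a = b then Pi.single i 1 else Pi.single i 1 + e • c b

variable {i : Fin N} {b : ℕ} {c : ℕ → Fin N → K} {e : K}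

theorem linForm_extendForms_self : linForm (extendForms i b c e b) = X i := by
  rw [extendForms, if_neg (lt_irrefl b), if_pos rfl, linForm_single_one]

theorem linForm_extendForms_succ :
    linForm (extendForms i b c e (b + 1)) = X i + C e * linForm (c b) := by
  rw [extendForms, if_neg (by omega), if_neg (by omega), map_add, linForm_single_one, map_smul,
    smul_eq_C_mul]

theorem linFormProd_extendForms {w : Multiset ℕ} (hw : ∀ a ∈ w, a < b) :
    linFormProd (extendForms i b c e) w = linFormProd c w :=
  linFormProd_congr fun a ha => if_pos (hw a ha)

variable {m k : ℕ} {A : Set (Multiset ℕ)} {u : Multiset ℕ} (hm : m < N)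

theorem linFormProd_extendForms_spread (hu : u ∈ monomialsOn (m + 1) k) {ε : ℕ} (hε : ε ≤ 1) :
    linFormProd (extendForms i (m + 1 + 2 * k) c e) (spread ε u) = linFormProd c (spread ε u) := by
  refine linFormProd_extendForms fun a ha => ?_
  have := lt_of_mem_spread (le_of_mem_monomialsOn hu) ha
  rw [(mem_monomialsOn.1 hu).2] at this
  omega

theorem linFormProd_extendForms_succ_cons (hu : u ∈ monomialsOn (m + 1) k) :
    linFormProd (extendForms ⟨m, hm⟩ (m + 1 + 2 * k) c e) (spreadBy A ((m + 1) ::ₘ u)) =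
      interpolation hm A c (c (m + 1 + 2 * k)) e ((m + 1) ::ₘ u) := by
  by_cases hA : (m + 1) ::ₘ u ∈ A
  · rw [interpolation_succ_cons_of_mem _ _ _ _ hA, spreadBy_of_mem hA,
      spread_cons (le_of_mem_monomialsOn hu), linFormProd_cons, (mem_monomialsOn.1 hu).2,
      linForm_extendForms_succ, linFormProd_extendForms_spread hu le_rfl]
  · rw [interpolation_succ_cons_of_notMem _ _ _ _ hA, spreadBy_of_notMem hA,
      spread_cons (le_of_mem_monomialsOn hu), linFormProd_cons, (mem_monomialsOn.1 hu).2, add_zero,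
      linForm_extendForms_self, linFormProd_extendForms_spread hu zero_le_one]

theorem linFormProd_spreadBy_cons_eq_smul_sub (he : e ≠ 0) (hu : u ∈ monomialsOn (m + 1) k)
    (hum : ∀ x ∈ u, x ≤ m) (hA : m ::ₘ u ∈ A) (hA' : (m + 1) ::ₘ u ∈ A) :
    linFormProd c (spreadBy A (m ::ₘ u)) = e⁻¹ •
      (linFormProd (extendForms ⟨m, hm⟩ (m + 1 + 2 * k) c e) (spreadBy A ((m + 1) ::ₘ u)) -
        linFormProd (extendForms ⟨m, hm⟩ (m + 1 + 2 * k) c e) (spreadBy A (m ::ₘ u))) := by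
  have hcons : spreadBy A (m ::ₘ u) = (m + 1 + 2 * k) ::ₘ spread 1 u := by
    rw [spreadBy_of_mem hA, spread_cons hum, (mem_monomialsOn.1 hu).2, add_right_comm]
  rw [linFormProd_extendForms_succ_cons hm hu, interpolation_succ_cons_of_mem _ _ _ _ hA', hcons,
    linFormProd_cons, linFormProd_cons, linForm_extendForms_self,
    linFormProd_extendForms_spread hu le_rfl, add_mul, add_sub_cancel_left, smul_eq_C_mul,
    ← mul_assoc, ← mul_assoc, ← C_mul, inv_mul_cancel₀ he, C_1, one_mul]

theorem linFormProd_extendForms_spreadBy (hu : u ∈ monomialsOn m (k + 1)) (h : m ∈ u → u ∉ A) :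
    linFormProd (extendForms i (m + 1 + 2 * k) c e) (spreadBy A u) =
      linFormProd c (spreadBy A u) := by
  obtain ⟨hIcc, hcard⟩ := mem_monomialsOn.1 hu
  refine linFormProd_extendForms fun a ha => ?_
  by_cases huA : u ∈ A
  · have hlt : ∀ x ∈ u, x ≤ m - 1 := fun x hx => Nat.le_sub_one_of_lt <|
      (le_of_mem_monomialsOn hu x hx).lt_of_ne (ne_of_mem_of_not_mem hx fun hmem => h hmem huA)
    obtain ⟨x, hx⟩ := Multiset.card_pos_iff_exists_mem.1 (by omega : 0 < u.card)
    have hm0 := Finset.mem_Icc.1 (hIcc x hx)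
    rw [spreadBy_of_mem huA] at ha
    have := lt_of_mem_spread hlt ha
    omega
  · rw [spreadBy_of_notMem huA] at ha
    have := lt_of_mem_spread (le_of_mem_monomialsOn hu) ha
    omega

theorem interpolation_mem_span_extendForms (hA : ∀ u, m ::ₘ u ∈ A → (m + 1) ::ₘ u ∈ A)
    (he : e ≠ 0) (hu : u ∈ monomialsOn (m + 1) (k + 1)) :
    interpolation hm A c (c (m + 1 + 2 * k)) e u ∈ Submodule.span K
      ((fun u => linFormProd (extendForms ⟨m, hm⟩ (m + 1 + 2 * k) c e) (spreadBy A u)) ''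
        monomialsOn (m + 1) (k + 1)) := by
  rcases mem_monomialsOn_succ_succ_iff.1 hu with hum | ⟨v, hv, rfl⟩
  · rw [interpolation_of_notMem _ _ _ _ (succ_notMem_of_mem_monomialsOn hum)]
    by_cases hmem : m ∈ u ∧ u ∈ A
    · obtain ⟨v, rfl⟩ := Multiset.exists_cons_of_mem hmem.1
      have hv := (cons_mem_monomialsOn.1 hu).2
      have hvm : ∀ x ∈ v, x ≤ m := fun x hx =>
        le_of_mem_monomialsOn hum x (Multiset.mem_cons_of_mem hx)
      rw [linFormProd_spreadBy_cons_eq_smul_sub hm he hv hvm hmem.2 (hA v hmem.2)]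
      exact Submodule.smul_mem _ _ (Submodule.sub_mem _
        (Submodule.subset_span ⟨_, succ_cons_mem_monomialsOn.2 hv, rfl⟩)
        (Submodule.subset_span ⟨_, hu, rfl⟩))
    · rw [← linFormProd_extendForms_spreadBy hum (not_and.1 hmem)]
      exact Submodule.subset_span ⟨u, hu, rfl⟩
  · rw [← linFormProd_extendForms_succ_cons hm hv]
    exact Submodule.subset_span ⟨_, hu, rfl⟩

end ExtendForms

section ExistsCoeffIndep

variable {N m k : ℕ} {K : Type*} [Field K] {A : Set (Multiset ℕ)}

theorem exists_coeffIndep_succ_succ [Infinite K] (hm : m < N)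
    (hA : ∀ u, m ::ₘ u ∈ A → (m + 1) ::ₘ u ∈ A) {c : ℕ → Fin N → K}
    (h₁ : CoeffIndep (m + 1) k fun u => linFormProd c (spreadBy (((m + 1) ::ₘ ·) ⁻¹' A) u))
    (h₂ : CoeffIndep m (k + 1) fun u => linFormProd c (spreadBy A u)) :
    ∃ c' : ℕ → Fin N → K, CoeffIndep (m + 1) (k + 1) fun u => linFormProd c' (spreadBy A u) := by
  obtain ⟨e, he, h⟩ := exists_coeffIndep_interpolation hm c (c (m + 1 + 2 * k))
    (coeffIndep_interpolation_zero hm c _ h₁ h₂)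
  exact ⟨_, h.of_mem_span fun u hu => interpolation_mem_span_extendForms hm hA he hu⟩

theorem exists_ne_zero_forall_coeffIndep {c : ℕ → Fin N → K}
    (h : CoeffIndep m k fun u => linFormProd c (spreadBy A u)) :
    ∃ p : MvPolynomial (ℕ × Fin N) K, p ≠ 0 ∧ ∀ x, eval x p ≠ 0 →
      CoeffIndep m k fun u => linFormProd (fun a i => x (a, i)) (spreadBy A u) := by
  obtain ⟨p, hp⟩ := exists_eval_ne_zero_iff_coeffIndep (K := K) m k fun u =>
    linFormProd (fun a i => (X (a, i) : MvPolynomial (ℕ × Fin N) K)) (spreadBy A u)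
  simp only [map_linFormProd, Function.comp_def, eval_X] at hp
  refine ⟨p, ?_, fun x => (hp x).1⟩
  rintro rfl
  exact (hp fun y => c y.1 y.2).2 h (map_zero _)

theorem exists_coeffIndep [Infinite K] (hm : m ≤ N) (k : ℕ)
    (hA : ∀ u i j, i < j → j ≤ m → i ::ₘ u ∈ A → j ::ₘ u ∈ A) :
    ∃ c : ℕ → Fin N → K, CoeffIndep m k fun u => linFormProd c (spreadBy A u) := by
  induction m generalizing k A with
  | zero =>
    cases k with
    | zero => exact ⟨0, coeffIndep_zero (by simp [spreadBy, spread, linFormProd])⟩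
    | succ k => exact ⟨0, coeffIndep_zero_succ⟩
  | succ m ihm =>
    induction k generalizing A with
    | zero => exact ⟨0, coeffIndep_zero (by simp [spreadBy, spread, linFormProd])⟩
    | succ k ihk =>
      have hpre : ∀ u i j, i < j → j ≤ m + 1 → i ::ₘ u ∈ ((m + 1) ::ₘ ·) ⁻¹' A →
          j ::ₘ u ∈ ((m + 1) ::ₘ ·) ⁻¹' A := by
        intro u i j hij hj h
        rw [Set.mem_preimage, Multiset.cons_swap] at h ⊢
        exact hA _ i j hij hj h
      obtain ⟨c₁, h₁⟩ := ihk hpre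
      obtain ⟨c₂, h₂⟩ := ihm (by omega) (k + 1) fun u i j hij hj => hA u i j hij (by omega)
      obtain ⟨p₁, hp₁, hx₁⟩ := exists_ne_zero_forall_coeffIndep h₁
      obtain ⟨p₂, hp₂, hx₂⟩ := exists_ne_zero_forall_coeffIndep h₂
      obtain ⟨x, hx⟩ := exists_eval_ne_zero (mul_ne_zero hp₁ hp₂)
      rw [map_mul] at hx
      exact exists_coeffIndep_succ_succ hm (fun u => hA u m (m + 1) m.lt_succ_self le_rfl)
        (hx₁ x (left_ne_zero_of_mul hx)) (hx₂ x (right_ne_zero_of_mul hx))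

end ExistsCoeffIndep

/-! ### Leading monomials in generic coordinates -/

section GenLin

variable {N : ℕ} {R : Type*} [CommRing R]

theorem isHomogeneous_genLin (M : Matrix (Fin N) (Fin N) R) {f : MvPolynomial (Fin N) R} {k : ℕ}
    (hf : f.IsHomogeneous k) : (genLin M f).IsHomogeneous k := by
  have hcol : ∀ j, (∑ a, C (M a j) * X a).IsHomogeneous 1 := fun j =>
    IsHomogeneous.sum _ _ _ fun _ _ => isHomogeneous_C_mul_X _ _
  rw [← one_mul k]
  exact hf.aeval _ hcol

theorem genLin_homogeneousComponent (M : Matrix (Fin N) (Fin N) R) (k : ℕ)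
    (f : MvPolynomial (Fin N) R) :
    genLin M (homogeneousComponent k f) = homogeneousComponent k (genLin M f) := by
  induction f using MvPolynomial.induction_on' with
  | monomial e a =>
    have h : (monomial e a).IsHomogeneous e.degree := isHomogeneous_monomial a rfl
    rw [homogeneousComponent_of_mem h, homogeneousComponent_of_mem (isHomogeneous_genLin M h)]
    split_ifs <;> simp
  | add p q hp hq => simp only [map_add, hp, hq]

theorem genLin_genLin (A B : Matrix (Fin N) (Fin N) R) (f : MvPolynomial (Fin N) R) :
    genLin A (genLin B f) = genLin (A * B) f := by
  have hcomp : (genLin A).comp (genLin B) = genLin (A * B) := by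
    ext1 j
    simp only [genLin, AlgHom.comp_apply, aeval_X, map_sum, map_mul, Matrix.mul_apply,
      Finset.sum_mul, Finset.mul_sum, algHom_C, algebraMap_eq]
    rw [Finset.sum_comm]
    refine Finset.sum_congr rfl fun a _ => Finset.sum_congr rfl fun b _ => ?_
    ring
  exact DFunLike.congr_fun hcomp f

theorem genLin_one (f : MvPolynomial (Fin N) R) : genLin 1 f = f := by
  have hid : genLin (1 : Matrix (Fin N) (Fin N) R) = AlgHom.id R _ := by
    ext1 j
    rw [genLin, aeval_X, Finset.sum_eq_single j]
    · simp
    · intro b _ hb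
      simp [Matrix.one_apply_ne hb]
    · simp
  exact DFunLike.congr_fun hid f

theorem genLin_surjective {M : Matrix (Fin N) (Fin N) R} (hM : IsUnit M.det) :
    Function.Surjective (genLin M) := fun f =>
  ⟨genLin M⁻¹ f, by rw [genLin_genLin, Matrix.mul_nonsing_inv _ hM, genLin_one]⟩

end GenLin

section SrIdeal

variable {N : ℕ} {R : Type*} [CommRing R] {Γ : Set (Finset ℕ)}

theorem faceMonomial_eq_monomial (F : Finset ℕ) :
    faceMonomial R N F = monomial (multisetToExp N F.val) 1 := by
  have hexp : multisetToExp N F.val =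
      ∑ a ∈ Finset.univ.filter (fun a : Fin N => (a : ℕ) + 1 ∈ F), Finsupp.single a 1 := by
    ext b
    rw [multisetToExp_apply, Finsupp.finsetSum_apply]
    simp [Finsupp.single_apply, Multiset.count_eq_of_nodup F.nodup]
  rw [hexp, monomial_sum_one]
  rfl

theorem subset_toFinset_expToMultiset {F : Finset ℕ} (hF : F ⊆ Finset.Icc 1 N) {e : Fin N →₀ ℕ}
    (h : multisetToExp N F.val ≤ e) : F ⊆ (expToMultiset e).toFinset := by
  intro x hx
  have hx' := Finset.mem_Icc.1 (hF hx)
  have hcount := h ⟨x - 1, by omega⟩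
  rw [← multisetToExp_expToMultiset e] at hcount
  simp only [multisetToExp_apply, Nat.sub_add_cancel hx'.1] at hcount
  rw [Multiset.mem_toFinset, ← Multiset.one_le_count_iff_mem]
  exact (Multiset.one_le_count_iff_mem.2 hx).trans hcount

theorem toFinset_notMem_of_mem_srIdeal (hΓ : ∀ F ∈ Γ, ∀ G ⊆ F, G ∈ Γ)
    {f : MvPolynomial (Fin N) R} (hf : f ∈ srIdeal R N Γ) {e : Fin N →₀ ℕ} (he : e ∈ f.support) :
    (expToMultiset e).toFinset ∉ Γ := by
  have hgens : {f | ∃ F : Finset ℕ, F ⊆ Finset.Icc 1 N ∧ F ∉ Γ ∧ f = faceMonomial R N F} =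
      (fun s => monomial s (1 : R)) ''
        {s | ∃ F : Finset ℕ, F ⊆ Finset.Icc 1 N ∧ F ∉ Γ ∧ multisetToExp N F.val = s} := by
    ext f
    constructor
    · rintro ⟨F, hF, hFΓ, rfl⟩
      exact ⟨_, ⟨F, hF, hFΓ, rfl⟩, (faceMonomial_eq_monomial F).symm⟩
    · rintro ⟨_, ⟨F, hF, hFΓ, rfl⟩, rfl⟩
      exact ⟨F, hF, hFΓ, (faceMonomial_eq_monomial F).symm⟩
  rw [srIdeal, hgens, mem_ideal_span_monomial_image] at hf
  obtain ⟨_, ⟨F, hF, hFΓ, rfl⟩, hle⟩ := hf e he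
  exact fun h => hFΓ (hΓ _ h _ (subset_toFinset_expToMultiset hF hle))

theorem monomial_mem_srIdeal {w : Multiset ℕ} (hw : ∀ x ∈ w, x ∈ Finset.Icc 1 N)
    (hwΓ : w.toFinset ∉ Γ) : monomial (multisetToExp N w) (1 : R) ∈ srIdeal R N Γ := by
  have hface : monomial (multisetToExp N w.toFinset.val) (1 : R) ∈ srIdeal R N Γ := by
    rw [← faceMonomial_eq_monomial]
    exact Ideal.subset_span ⟨_, fun x hx => hw x (Multiset.mem_toFinset.1 hx), hwΓ, rfl⟩
  have hle : w.toFinset.val ≤ w := Multiset.dedup_le w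
  have hmul : monomial (multisetToExp N w) (1 : R) =
      monomial (multisetToExp N (w - w.toFinset.val)) 1 *
        monomial (multisetToExp N w.toFinset.val) 1 := by
    rw [monomial_mul, one_mul, ← multisetToExp_add, tsub_add_cancel_of_le hle]
  rw [hmul]
  exact Ideal.mul_mem_left _ _ hface

end SrIdeal

section Image

variable {N k : ℕ} {K : Type*} [Field K] {Γ : Set (Finset ℕ)}
  {M : Matrix (Fin N) (Fin N) K} {S : Set (Multiset ℕ)}

/-- The image of the monomial `w` under the change of coordinates `M`. -/
noncomputable def imageMonomial (M : Matrix (Fin N) (Fin N) K) (w : Multiset ℕ) :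
    MvPolynomial (Fin N) K :=
  genLin M (monomial (multisetToExp N w) 1)

/-- The span of the images of the monomials in `S` under the change of coordinates `M`. -/
noncomputable def imageSpan (M : Matrix (Fin N) (Fin N) K) (S : Set (Multiset ℕ)) :
    Submodule K (MvPolynomial (Fin N) K) :=
  Submodule.span K (imageMonomial M '' S)

/-- The image of the Stanley–Reisner ideal of `Γ` under the change of coordinates `M`. -/
noncomputable def imageIdeal (M : Matrix (Fin N) (Fin N) K) (Γ : Set (Finset ℕ)) :
    Ideal (MvPolynomial (Fin N) K) :=
  (srIdeal K N Γ).map (genLin M)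

theorem imageMonomial_of_eq_linFormProd (c : ℕ → Fin N → K) {w : Multiset ℕ}
    (hw : ∀ x ∈ w, x ∈ Finset.Icc 1 N) :
    imageMonomial (Matrix.of fun i j : Fin N => c (j + 1) i) w = linFormProd c w := by
  rw [imageMonomial]
  induction w using Multiset.induction with
  | empty => simp [multisetToExp_zero, linFormProd]
  | cons a w ih =>
    rw [Multiset.forall_mem_cons, Finset.mem_Icc] at hw
    obtain ⟨j, rfl⟩ := Nat.exists_eq_add_of_le' hw.1.1
    rw [multisetToExp_succ_cons hw.1.2, ← one_mul (1 : K), ← monomial_mul, map_mul, ih hw.2,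
      linFormProd_cons, ← X, genLin, aeval_X, linForm_apply]
    rfl

theorem imageSpan_image (s : Multiset ℕ → Multiset ℕ) :
    imageSpan M (s '' S) = Submodule.span K ((fun u => imageMonomial M (s u)) '' S) := by
  rw [imageSpan, Set.image_image]

theorem finrank_imageSpan_le_card (M : Matrix (Fin N) (Fin N) K) (S : Finset (Multiset ℕ)) :
    Module.finrank K (imageSpan M S) ≤ S.card := by
  classical
  rw [imageSpan, ← Finset.coe_image]
  exact (finrank_span_finset_le_card _).trans Finset.card_image_le

instance finite_imageSpan (M : Matrix (Fin N) (Fin N) K) (S : Finset (Multiset ℕ)) :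
    Module.Finite K (imageSpan M S) := by
  classical
  rw [imageSpan, ← Finset.coe_image]
  exact Module.Finite.span_finset K _

theorem isHomogeneous_imageMonomial (M : Matrix (Fin N) (Fin N) K) {w : Multiset ℕ}
    (hw : w ∈ monomialsOn N k) : (imageMonomial M w).IsHomogeneous k := by
  rw [mem_monomialsOn] at hw
  exact isHomogeneous_genLin M (isHomogeneous_monomial _ (by rw [degree_multisetToExp hw.1, hw.2]))

theorem imageIdeal_anti {Δ : Set (Finset ℕ)} (h : Γ ⊆ Δ) : imageIdeal M Δ ≤ imageIdeal M Γ := by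
  refine Ideal.map_mono (Ideal.span_mono ?_)
  rintro _ ⟨F, hF, hFΔ, rfl⟩
  exact ⟨F, hF, mt (@h F) hFΔ, rfl⟩

theorem mem_imageIdeal_of_mem_imageSpan
    (hS : ∀ w ∈ S, (∀ x ∈ w, x ∈ Finset.Icc 1 N) ∧ w.toFinset ∉ Γ)
    {f : MvPolynomial (Fin N) K} (hf : f ∈ imageSpan M S) : f ∈ imageIdeal M Γ := by
  suffices imageSpan M S ≤ (imageIdeal M Γ).restrictScalars K from this hf
  rw [imageSpan, Submodule.span_le]
  rintro _ ⟨w, hw, rfl⟩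
  exact Ideal.mem_map_of_mem _ (monomial_mem_srIdeal (hS w hw).1 (hS w hw).2)

theorem homogeneousComponent_mem_imageSpan (hM : IsUnit M.det)
    (hΓ : ∀ F ∈ Γ, ∀ G ⊆ F, G ∈ Γ) {f : MvPolynomial (Fin N) K} (hf : f ∈ imageIdeal M Γ) :
    homogeneousComponent k f ∈ imageSpan M {w | w ∈ monomialsOn N k ∧ w.toFinset ∉ Γ} := by
  obtain ⟨g, hg, rfl⟩ := (Ideal.mem_map_iff_of_surjective _ (genLin_surjective hM)).1 hf
  rw [← genLin_homogeneousComponent, homogeneousComponent_apply, map_sum]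
  refine Submodule.sum_mem _ fun e he => ?_
  obtain ⟨heg, hek⟩ := Finset.mem_filter.1 he
  have himage : genLin M (monomial e (coeff e g)) =
      coeff e g • imageMonomial M (expToMultiset e) := by
    rw [imageMonomial, multisetToExp_expToMultiset, ← map_smul, smul_monomial, smul_eq_mul, mul_one]
  rw [himage]
  refine Submodule.smul_mem _ _ (Submodule.subset_span ⟨_, ⟨mem_monomialsOn.2
    ⟨mem_Icc_of_mem_expToMultiset e, ?_⟩, toFinset_notMem_of_mem_srIdeal hΓ hg heg⟩, rfl⟩)
  rw [card_expToMultiset, hek]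

end Image

section HasLeadingMonomial

variable {N k : ℕ} {K : Type*} [Field K]

/-- The monomial `u` is the leading monomial of an element of `W`, a linear subspace or an ideal. -/
def HasLeadingMonomial {S : Type*} [SetLike S (MvPolynomial (Fin N) K)] (W : S)
    (u : Multiset ℕ) : Prop :=
  ∃ f ∈ W, IsLeadingExp f (multisetToExp N u)

variable {S S' : Type*} [SetLike S (MvPolynomial (Fin N) K)] [SetLike S' (MvPolynomial (Fin N) K)]
  {u v : Multiset ℕ} {M : Matrix (Fin N) (Fin N) K}

theorem HasLeadingMonomial.mono {W : S} {W' : S'} (hW : ∀ f ∈ W, f ∈ W')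
    (h : HasLeadingMonomial W u) : HasLeadingMonomial W' u :=
  h.imp fun f hf => ⟨hW f hf.1, hf.2⟩

theorem HasLeadingMonomial.of_le {I : Ideal (MvPolynomial (Fin N) K)}
    (h : HasLeadingMonomial I u) (huv : u ≤ v) : HasLeadingMonomial I v := by
  obtain ⟨f, hf, hlead⟩ := h
  have hmul := hlead.monomial_mul (multisetToExp N (v - u))
  rw [← multisetToExp_add, tsub_add_cancel_of_le huv] at hmul
  exact ⟨_, I.mul_mem_left _ hf, hmul⟩

theorem HasLeadingMonomial.imageSpan_of_imageIdeal (hM : IsUnit M.det) {Γ : Set (Finset ℕ)}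
    (hΓ : ∀ F ∈ Γ, ∀ G ⊆ F, G ∈ Γ) (hu : u ∈ monomialsOn N k)
    (h : HasLeadingMonomial (imageIdeal M Γ) u) :
    HasLeadingMonomial (imageSpan M {w | w ∈ monomialsOn N k ∧ w.toFinset ∉ Γ}) u := by
  obtain ⟨f, hf, hfu, hlead⟩ := h
  rw [mem_monomialsOn] at hu
  refine ⟨_, homogeneousComponent_mem_imageSpan hM hΓ hf, ?_, fun v hv => hlead v ?_⟩
  · rw [support_homogeneousComponent, Finset.mem_filter]
    exact ⟨hfu, (degree_multisetToExp hu.1).trans hu.2⟩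
  · rw [support_homogeneousComponent, Finset.mem_filter] at hv
    exact hv.1

theorem card_le_card_of_hasLeadingMonomial {A B : Finset (Multiset ℕ)}
    (hA : ∀ u ∈ A, ∀ x ∈ u, x ∈ Finset.Icc 1 N)
    (h : ∀ u ∈ A, HasLeadingMonomial (imageSpan M B) u) : A.card ≤ B.card := by
  classical
  have hcard : (A.image (multisetToExp N)).card = A.card :=
    Finset.card_image_of_injOn fun u hu v hv => multisetToExp_injOn (hA u hu) (hA v hv)
  rw [← hcard]
  refine (card_le_finrank_of_isLeadingExp fun e he => ?_).trans (finrank_imageSpan_le_card M B)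
  obtain ⟨u, hu, rfl⟩ := Finset.mem_image.1 he
  exact h u hu

end HasLeadingMonomial

section CoeffIndepLeading

variable {N m k : ℕ} {K : Type*} [Field K] {f : Multiset ℕ → MvPolynomial (Fin N) K}

theorem CoeffIndep.exists_mem_support (hf : CoeffIndep m k f) {p : MvPolynomial (Fin N) K}
    (hp : p ∈ Submodule.span K (f '' monomialsOn m k)) (hp0 : p ≠ 0) :
    ∃ w ∈ monomialsOn m k, multisetToExp N w ∈ p.support := by
  obtain ⟨a, rfl⟩ := (Submodule.mem_span_image_finset_iff_exists_fun K).1 hp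
  by_contra! hcon
  refine hp0 (Finset.sum_eq_zero fun u _ => ?_)
  rw [Fintype.linearIndependent_iff.1 hf a (funext fun w => ?_) u, zero_smul]
  have := hcon w w.2
  rw [notMem_support_iff, coeff_sum] at this
  simpa [restrictCoeffs_apply] using this

theorem CoeffIndep.card_le_finrank (hf : CoeffIndep m k f) {D : Finset (Multiset ℕ)}
    (hD : D ⊆ monomialsOn m k) : D.card ≤ Module.finrank K (Submodule.span K (f '' D)) := by
  have hli : LinearIndependent K fun u : D => f u :=
    (LinearIndependent.of_comp (restrictCoeffs N K m k) hf).comp (fun u : D => ⟨u, hD u.2⟩)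
      fun u v h => Subtype.ext (congrArg (fun w : monomialsOn m k => (w : Multiset ℕ)) h)
  have := finrank_span_eq_card hli
  rw [Fintype.card_coe] at this
  rw [← this, Set.image_eq_range]
  exact le_rfl

theorem CoeffIndep.mem_monomialsOn_of_isLeadingExp (hf : CoeffIndep m k f) (hm : m ≤ N)
    (hhom : ∀ u ∈ monomialsOn m k, (f u).IsHomogeneous k) {p : MvPolynomial (Fin N) K}
    (hp : p ∈ Submodule.span K (f '' monomialsOn m k)) {e : Fin N →₀ ℕ} (he : IsLeadingExp p e) :
    expToMultiset e ∈ monomialsOn m k := by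
  have hphom : p ∈ homogeneousSubmodule (Fin N) K k := by
    refine Submodule.span_le.2 ?_ hp
    rintro _ ⟨u, hu, rfl⟩
    exact hhom u hu
  have heN : expToMultiset e ∈ monomialsOn N k := by
    refine mem_monomialsOn.2 ⟨mem_Icc_of_mem_expToMultiset e, ?_⟩
    rw [card_expToMultiset]
    by_contra hne
    exact mem_support_iff.1 he.1 (IsHomogeneous.coeff_eq_zero hphom hne)
  obtain ⟨w, hw, hwp⟩ := hf.exists_mem_support hp (by rintro rfl; simpa using he.1)
  rw [← multisetToExp_expToMultiset e] at he
  exact mem_monomialsOn_of_le heN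
    (he.le_of_mem heN (monomialsOn_mono hm hw) (le_of_mem_monomialsOn hw) hwp)

/-- The span has dimension `D.card`, and as many leading monomials. -/
theorem CoeffIndep.hasLeadingMonomial_of_forall (hf : CoeffIndep m k f)
    {D : Finset (Multiset ℕ)} (hD : D ⊆ monomialsOn m k)
    (hlead : ∀ p ∈ Submodule.span K (f '' D), ∀ e, IsLeadingExp p e → expToMultiset e ∈ D)
    {u : Multiset ℕ} (hu : u ∈ D) : HasLeadingMonomial (Submodule.span K (f '' D)) u := by
  classical
  by_contra hcon
  have hfinrank : Module.finrank K (Submodule.span K (f '' D)) ≤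
      ((D.erase u).image (multisetToExp N)).card := by
    refine finrank_le_card_of_isLeadingExp fun p hp e he => Finset.mem_image.2
      ⟨expToMultiset e, Finset.mem_erase.2 ⟨?_, hlead p hp e he⟩, multisetToExp_expToMultiset e⟩
    rintro rfl
    exact hcon ⟨p, hp, by rwa [multisetToExp_expToMultiset]⟩
  have := (hf.card_le_finrank hD).trans (hfinrank.trans Finset.card_image_le)
  exact this.not_gt (Finset.card_erase_lt_of_mem hu)

theorem CoeffIndep.hasLeadingMonomial (hf : CoeffIndep m k f) (hm : m ≤ N)
    (hhom : ∀ u ∈ monomialsOn m k, (f u).IsHomogeneous k) {u : Multiset ℕ}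
    (hu : u ∈ monomialsOn m k) :
    HasLeadingMonomial (Submodule.span K (f '' monomialsOn m k)) u :=
  hf.hasLeadingMonomial_of_forall subset_rfl
    (fun _ hp _ he => hf.mem_monomialsOn_of_isLeadingExp hm hhom hp he) hu

end CoeffIndepLeading

section Ball

variable {m d e k : ℕ} {K : Type*} [Field K] {U : Set (Multiset ℕ)} {u v : Multiset ℕ}
  {M : Matrix (Fin (m + d + 1)) (Fin (m + d + 1)) K}

theorem spread_mem_monomialsOn (he : e ≤ 1) (hk : k ≤ d / 2 + 1) (hv : v ∈ monomialsOn m k) :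
    spread e v ∈ monomialsOn (m + d + 1) k := by
  have hvm := mem_monomialsOn.1 hv
  refine mem_monomialsOn.2 ⟨fun x hx => ?_, (card_spread e v).trans hvm.2⟩
  have hlt := lt_of_mem_spread (le_of_mem_monomialsOn hv) hx
  obtain ⟨t, ht, rfl⟩ := (mem_spread (D := 0)).1 hx
  have hpos := Finset.mem_Icc.1 (hvm.1 _ (nthIndex_mem (D := 0) ht))
  rw [Finset.mem_Icc]
  omega

theorem spreadBy_mem_monomialsOn (U : Set (Multiset ℕ)) (hk : k ≤ d / 2 + 1)
    (hv : v ∈ monomialsOn m k) : spreadBy U v ∈ monomialsOn (m + d + 1) k := by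
  by_cases hvU : v ∈ U
  · exact spreadBy_of_mem hvU ▸ spread_mem_monomialsOn le_rfl hk hv
  · exact spreadBy_of_notMem hvU ▸ spread_mem_monomialsOn zero_le_one hk hv

theorem coe_nonfaceMonomials (m d k : ℕ) (U : Set (Multiset ℕ)) :
    (nonfaceMonomials m d k U : Set (Multiset ℕ)) =
      {w | w ∈ monomialsOn (m + d + 1) k ∧ w.toFinset ∉ ballOfMonomials m d U} :=
  Set.ext fun _ => mem_nonfaceMonomials

/-- The monomials with part on `[m]` outside `U` are leading monomials already, and there are at
least as many of them as there are nonface monomials. -/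
theorem filter_notMem_of_hasLeadingMonomial (hM : IsUnit M.det) (hk : k ≤ d / 2 + 1)
    (hlead : ∀ v, (∀ x ∈ v, x ∈ Finset.Icc 1 m) → v.card ≤ k → v ∉ U →
      HasLeadingMonomial (imageIdeal M (ballOfMonomials m d U)) v)
    (hv : v ∈ monomialsOn (m + d + 1) k)
    (h : HasLeadingMonomial (imageIdeal M (ballOfMonomials m d U)) v) :
    v.filter (· ≤ m) ∉ U := by
  intro hvU
  have hmem : ∀ w ∈ (nonmemberMonomials m d k U).cons v
      fun hv' => (mem_nonmemberMonomials.1 hv').2 hvU,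
      w ∈ monomialsOn (m + d + 1) k ∧
        HasLeadingMonomial (imageIdeal M (ballOfMonomials m d U)) w := by
    intro w hw
    obtain rfl | hw := Finset.mem_cons.1 hw
    · exact ⟨hv, h⟩
    · obtain ⟨hwN, hwU⟩ := mem_nonmemberMonomials.1 hw
      obtain ⟨hwIcc, hwk⟩ := mem_monomialsOn.1 hwN
      have hfilter : w.filter (· ≤ m) ≤ w := Multiset.filter_le _ _
      refine ⟨hwN, (hlead _ (fun x hx => ?_) ?_ hwU).of_le hfilter⟩
      · obtain ⟨hxw, hxm⟩ := Multiset.mem_filter.1 hx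
        exact Finset.mem_Icc.2 ⟨(Finset.mem_Icc.1 (hwIcc x hxw)).1, hxm⟩
      · exact (Multiset.card_le_card hfilter).trans hwk.le
  have hcard := card_le_card_of_hasLeadingMonomial (B := nonfaceMonomials m d k U)
    (fun w hw => (mem_monomialsOn.1 (hmem w hw).1).1) fun w hw => by
      rw [coe_nonfaceMonomials]
      exact (hmem w hw).2.imageSpan_of_imageIdeal hM
        (fun _ hF _ hG => ballOfMonomials_downward_closed hF hG) (hmem w hw).1
  rw [Finset.card_cons] at hcard
  exact (hcard.trans (card_nonfaceMonomials_le hk U)).not_gt (Nat.lt_succ_self _)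

end Ball

section Dominating

variable {m d k : ℕ} {U : Set (Multiset ℕ)} {b : ℕ} {u v w : Multiset ℕ}

/-- The monomials on `[m]` obtained from `u`, of the same degree, by lowering indices. -/
def dominating (m : ℕ) (u : Multiset ℕ) : Finset (Multiset ℕ) :=
  (monomialsOn m u.card).filter fun v => ∀ c ≤ m, countLE c u ≤ countLE c v

theorem mem_dominating : v ∈ dominating m u ↔
    v ∈ monomialsOn m u.card ∧ ∀ c ≤ m, countLE c u ≤ countLE c v :=
  Finset.mem_filter

theorem self_mem_dominating (hu : u ∈ monomialsOn m k) : u ∈ dominating m u :=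
  mem_dominating.2 ⟨mem_monomialsOn.2 ⟨(mem_monomialsOn.1 hu).1, rfl⟩, fun _ _ => le_rfl⟩

theorem dominating_subset_monomialsOn (hb : b ≤ m) (hu : u ∈ monomialsOn b k) :
    dominating m u ⊆ monomialsOn b k := by
  intro v hv
  obtain ⟨hvm, hle⟩ := mem_dominating.1 hv
  rw [(mem_monomialsOn.1 hu).2] at hvm
  have hcount := hle b hb
  rw [countLE_eq_card (le_of_mem_monomialsOn hu), (mem_monomialsOn.1 hu).2,
    ← (mem_monomialsOn.1 hvm).2] at hcount
  exact mem_monomialsOn_of_le hvm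
    (Multiset.countP_eq_card.1 (le_antisymm (countLE_le_card b v) hcount))

theorem ShiftClosed.notMem_of_mem_dominating (hU : ShiftClosed m U) (hu : u ∈ monomialsOn m k)
    (huU : u ∉ U) (hv : v ∈ dominating m u) : v ∉ U := by
  refine fun hvU => huU (hU.mem_of_nthIndex_le hvU (le_of_mem_monomialsOn hu) fun t ht => ?_)
  have hle := le_of_mem_monomialsOn hu _ (nthIndex_mem (D := m + 1) ht)
  have hlt := Nat.lt_succ_of_le hle
  rw [nthIndex_le_iff hlt]
  exact ((nthIndex_le_iff hlt).1 le_rfl).trans_le ((mem_dominating.1 hv).2 _ hle)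

theorem exists_le_card_eq_of_countLE_le (h : ∀ c ≤ m, countLE c u ≤ countLE c v)
    (hcard : u.card ≤ v.card) :
    ∃ w ≤ v, w.card = u.card ∧ ∀ c ≤ m, countLE c u ≤ countLE c w := by
  induction v using multiset_induction_on_max with
  | zero => exact ⟨0, le_rfl, by simpa [eq_comm] using hcard, h⟩
  | cons b v hmax ih =>
    obtain heq | hlt := hcard.eq_or_lt
    · exact ⟨_, le_rfl, heq.symm, h⟩
    · rw [Multiset.card_cons, Nat.lt_succ_iff] at hlt
      have hv : ∀ c ≤ m, countLE c u ≤ countLE c v := by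
        intro c hc
        by_cases hbc : b ≤ c
        · rw [countLE_eq_card fun x hx => (hmax x hx).trans hbc]
          exact (countLE_le_card c u).trans hlt
        · simpa only [countLE_cons, if_neg hbc, add_zero] using h c hc
      obtain ⟨w, hwv, hw⟩ := ih hv hlt
      exact ⟨w, hwv.trans (Multiset.le_cons_self _ _), hw⟩

/-- The monomials on `[m]` no divisor of which lies in `dominating m w`: the largest order ideal
avoiding that set, whose ball is used to show that `w` is a leading monomial. -/
def nonDominating (m : ℕ) (w : Multiset ℕ) : Set (Multiset ℕ) :=
  {v | (∀ x ∈ v, x ∈ Finset.Icc 1 m) ∧ ∃ c ≤ m, countLE c v < countLE c w}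

theorem notMem_nonDominating_iff (hv : ∀ x ∈ v, x ∈ Finset.Icc 1 m) :
    v ∉ nonDominating m w ↔ ∀ c ≤ m, countLE c w ≤ countLE c v := by
  simp only [nonDominating, Set.mem_ofPred_eq, not_and, not_exists, not_lt]
  exact ⟨fun h => h hv, fun h _ => h⟩

theorem shiftClosed_nonDominating (m : ℕ) (w : Multiset ℕ) :
    ShiftClosed m (nonDominating m w) where
  mem_Icc _ hu := hu.1
  down u hu v hvu := ⟨fun x hx => hu.1 x (Multiset.mem_of_le hvu hx),
    hu.2.imp fun _ hc => ⟨hc.1, (countLE_mono hvu).trans_lt hc.2⟩⟩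
  shift u i j hij hj hu := by
    obtain ⟨hIcc, c, hc, hlt⟩ := hu
    rw [Multiset.forall_mem_cons, Finset.mem_Icc] at hIcc
    refine ⟨?_, c, hc, ?_⟩
    · rw [Multiset.forall_mem_cons, Finset.mem_Icc]
      exact ⟨⟨hIcc.1.1.trans hij.le, hj⟩, hIcc.2⟩
    · rw [countLE_cons] at hlt ⊢
      split_ifs at hlt ⊢ <;> omega

end Dominating

section DominatingLeading

variable {m d k b : ℕ} {K : Type*} [Field K] {U : Set (Multiset ℕ)} {u w : Multiset ℕ}
  {M : Matrix (Fin (m + d + 1)) (Fin (m + d + 1)) K}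

/-- The conditions on a change of coordinates under which the leading monomials of the image of
the Stanley–Reisner ideal of a squeezed ball can be computed. -/
structure IsSpreadGeneric (m d : ℕ) {K : Type*} [Field K]
    (M : Matrix (Fin (m + d + 1)) (Fin (m + d + 1)) K) : Prop where
  isUnit_det : IsUnit M.det
  coeffIndep : ∀ c ≤ m, ∀ k ≤ d / 2 + 1, CoeffIndep c k fun u => imageMonomial M (spread 0 u)

theorem ShiftClosed.mem_imageIdeal_of_mem_imageSpan_spread (hU : ShiftClosed m U)
    (hk : k ≤ d / 2 + 1) {D : Finset (Multiset ℕ)} (hD : D ⊆ monomialsOn m k)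
    (hDU : ∀ v ∈ D, v ∉ U) :
    ∀ f ∈ imageSpan M (spread 0 '' D), f ∈ imageIdeal M (ballOfMonomials m d U) := by
  refine fun f => mem_imageIdeal_of_mem_imageSpan ?_
  rintro _ ⟨v, hv, rfl⟩
  exact ⟨(mem_monomialsOn.1 (spread_mem_monomialsOn zero_le_one hk (hD hv))).1, fun hball =>
    hDU v hv (hU.mem_of_spread_zero_mem_ball (le_of_mem_monomialsOn (hD hv)) hball)⟩

theorem ShiftClosed.hasLeadingMonomial_ball_of_dominating (hU : ShiftClosed m U)
    (hk : k ≤ d / 2 + 1) (hu : u ∈ monomialsOn m k) (huU : u ∉ U)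
    (h : HasLeadingMonomial (imageSpan M (spread 0 '' dominating m u)) u) :
    HasLeadingMonomial (imageIdeal M (ballOfMonomials m d U)) u :=
  h.mono <| hU.mem_imageIdeal_of_mem_imageSpan_spread hk (dominating_subset_monomialsOn le_rfl hu)
    fun _ => hU.notMem_of_mem_dominating hu huU

theorem hasLeadingMonomial_ball_nonDominating (hk : k ≤ d / 2 + 1) (hw : w ∈ monomialsOn m k)
    (hdom : ∀ v ∈ monomialsOn m k, HasLeadingMonomial (imageSpan M (spread 0 '' dominating m v)) v)
    (hu : ∀ x ∈ u, x ∈ Finset.Icc 1 m) (huw : u ∉ nonDominating m w) :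
    HasLeadingMonomial (imageIdeal M (ballOfMonomials m d (nonDominating m w))) u := by
  rw [notMem_nonDominating_iff hu] at huw
  have hcard : w.card ≤ u.card := by
    have hcount := huw m le_rfl
    rw [countLE_eq_card (le_of_mem_monomialsOn hw)] at hcount
    exact hcount.trans (countLE_le_card m u)
  obtain ⟨v, hvu, hvcard, hvw⟩ := exists_le_card_eq_of_countLE_le huw hcard
  have hv : ∀ x ∈ v, x ∈ Finset.Icc 1 m := fun x hx => hu x (Multiset.mem_of_le hvu hx)
  have hvk : v ∈ monomialsOn m k := mem_monomialsOn.2 ⟨hv, hvcard.trans (mem_monomialsOn.1 hw).2⟩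
  exact ((shiftClosed_nonDominating m w).hasLeadingMonomial_ball_of_dominating hk hvk
    ((notMem_nonDominating_iff hv).2 hvw) (hdom v hvk)).of_le hvu

theorem IsSpreadGeneric.expToMultiset_mem_dominating (hM : IsSpreadGeneric m d M)
    (hk : k + 1 ≤ d / 2 + 1) (hbw : b ::ₘ w ∈ monomialsOn m (k + 1)) (hmax : ∀ x ∈ w, x ≤ b)
    (hdom : ∀ v ∈ monomialsOn m k, HasLeadingMonomial (imageSpan M (spread 0 '' dominating m v)) v)
    {p : MvPolynomial (Fin (m + d + 1)) K}
    (hp : p ∈ imageSpan M (spread 0 '' dominating m (b ::ₘ w))) {e : Fin (m + d + 1) →₀ ℕ}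
    (he : IsLeadingExp p e) : expToMultiset e ∈ dominating m (b ::ₘ w) := by
  obtain ⟨hb, hw⟩ := cons_mem_monomialsOn.1 hbw
  have hbm := (Finset.mem_Icc.1 hb).2
  have hbwb : b ::ₘ w ∈ monomialsOn b (k + 1) :=
    mem_monomialsOn_of_le hbw (Multiset.forall_mem_cons.2 ⟨le_rfl, hmax⟩)
  have hvb : expToMultiset e ∈ monomialsOn b (k + 1) := by
    refine (hM.coeffIndep b hbm (k + 1) hk).mem_monomialsOn_of_isLeadingExp (by omega)
      (fun v hv => isHomogeneous_imageMonomial M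
        (spread_mem_monomialsOn zero_le_one hk (monomialsOn_mono hbm hv))) ?_ he
    rw [imageSpan_image] at hp
    exact Submodule.span_mono
      (Set.image_mono (Finset.coe_subset.2 (dominating_subset_monomialsOn hbm hbwb))) hp
  have hvm := monomialsOn_mono hbm hvb
  have hpI : p ∈ imageIdeal M (ballOfMonomials m d (nonDominating m w)) :=
    (shiftClosed_nonDominating m w).mem_imageIdeal_of_mem_imageSpan_spread hk
      (dominating_subset_monomialsOn le_rfl hbw) (fun v hv => by
        rw [notMem_nonDominating_iff
          (mem_monomialsOn.1 (dominating_subset_monomialsOn le_rfl hbw hv)).1]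
        exact fun c hc => (countLE_mono (Multiset.le_cons_self _ _)).trans
          ((mem_dominating.1 hv).2 c hc)) p hp
  have hvw := filter_notMem_of_hasLeadingMonomial hM.isUnit_det hk
    (fun v hv _ => hasLeadingMonomial_ball_nonDominating (by omega) hw hdom hv)
    (monomialsOn_mono (by omega) hvm) ⟨p, hpI, by rwa [multisetToExp_expToMultiset]⟩
  rw [Multiset.filter_eq_self.2 (le_of_mem_monomialsOn hvm),
    notMem_nonDominating_iff (mem_monomialsOn.1 hvm).1] at hvw
  refine mem_dominating.2 ⟨by rwa [(mem_monomialsOn.1 hbw).2], fun c hc => ?_⟩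
  by_cases hbc : b ≤ c
  · rw [countLE_eq_card fun x hx => (le_of_mem_monomialsOn hvb x hx).trans hbc,
      (mem_monomialsOn.1 hvb).2, ← (mem_monomialsOn.1 hbw).2]
    exact countLE_le_card _ _
  · rw [countLE_cons, if_neg hbc]
    exact hvw c hc

theorem IsSpreadGeneric.hasLeadingMonomial_dominating (hM : IsSpreadGeneric m d M)
    (hk : k ≤ d / 2 + 1) (hu : u ∈ monomialsOn m k) :
    HasLeadingMonomial (imageSpan M (spread 0 '' dominating m u)) u := by
  rw [imageSpan_image]
  induction k generalizing u with
  | zero =>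
    obtain rfl : u = 0 := by rwa [monomialsOn_zero, Finset.mem_singleton] at hu
    have hdom : dominating m 0 = monomialsOn m 0 :=
      Finset.filter_true_of_mem fun _ _ _ _ => Nat.zero_le _
    rw [hdom]
    exact (hM.coeffIndep m le_rfl 0 hk).hasLeadingMonomial (by omega) (fun v hv =>
      isHomogeneous_imageMonomial M (spread_mem_monomialsOn zero_le_one hk hv)) hu
  | succ k ih =>
    cases u using multiset_induction_on_max with
    | zero => simp [mem_monomialsOn] at hu
    | cons b w hmax =>
      refine (hM.coeffIndep m le_rfl (k + 1) hk).hasLeadingMonomial_of_forall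
        (dominating_subset_monomialsOn le_rfl hu) (fun p hp e he => ?_) (self_mem_dominating hu)
      rw [← imageSpan_image] at hp
      refine hM.expToMultiset_mem_dominating hk hu hmax (fun v hv => ?_) hp he
      rw [imageSpan_image]
      exact ih (by omega) hv

end DominatingLeading

section Generic

variable {m d k : ℕ} {K : Type*} [Field K] {U : Set (Multiset ℕ)} {u : Multiset ℕ}
  {M : Matrix (Fin (m + d + 1)) (Fin (m + d + 1)) K}

theorem exists_ne_zero_forall_coeffIndep_imageMonomial [Infinite K] {c : ℕ} (hc : c ≤ m)
    (hk : k ≤ d / 2 + 1)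
    (hU : ∀ u i j, i < j → j ≤ c → i ::ₘ u ∈ U → j ::ₘ u ∈ U) :
    ∃ p : MvPolynomial (ℕ × Fin (m + d + 1)) K, p ≠ 0 ∧ ∀ x, eval x p ≠ 0 →
      CoeffIndep c k fun u => imageMonomial
        (Matrix.of fun i j : Fin (m + d + 1) => x ((j : ℕ) + 1, i)) (spreadBy U u) := by
  obtain ⟨l, hl⟩ := exists_coeffIndep (K := K) (N := m + d + 1) (by omega : c ≤ _) k hU
  obtain ⟨p, hp, hcoeff⟩ := exists_ne_zero_forall_coeffIndep hl
  refine ⟨p, hp, fun x hx => (coeffIndep_congr fun u hu => ?_).2 (hcoeff x hx)⟩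
  exact imageMonomial_of_eq_linFormProd (fun a i => x (a, i))
    (mem_monomialsOn.1 (spreadBy_mem_monomialsOn U hk (monomialsOn_mono hc hu))).1

theorem exists_isSpreadGeneric [Infinite K] (hU : ShiftClosed m U)
    {p : MvPolynomial (Fin (m + d + 1) × Fin (m + d + 1)) K} (hp : p ≠ 0) :
    ∃ M : Matrix (Fin (m + d + 1)) (Fin (m + d + 1)) K, eval (fun q => M q.1 q.2) p ≠ 0 ∧
      IsSpreadGeneric m d M ∧
      CoeffIndep m (d / 2 + 1) fun u => imageMonomial M (spreadBy U u) := by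
  let ι (q : Fin (m + d + 1) × Fin (m + d + 1)) : ℕ × Fin (m + d + 1) := ((q.2 : ℕ) + 1, q.1)
  have hι : Function.Injective ι := fun a b h => by
    simp only [ι, Prod.mk.injEq, Nat.add_right_cancel_iff, Fin.val_inj] at h
    exact Prod.ext h.2 h.1
  have hrename : ∀ {q}, q ≠ 0 → rename (R := K) ι q ≠ 0 := fun h => by
    rwa [Ne, rename_injective ι hι |>.eq_iff' (map_zero _)]
  obtain ⟨r, hr, hrU⟩ := exists_ne_zero_forall_coeffIndep_imageMonomial (K := K) le_rfl le_rfl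
    hU.shift
  have hspread (c : Fin (m + 1)) (k : Fin (d / 2 + 2)) :=
    exists_ne_zero_forall_coeffIndep_imageMonomial (K := K) (Nat.lt_succ_iff.1 c.2)
      (Nat.lt_succ_iff.1 k.2) (U := ∅) fun _ _ _ _ _ h => h.elim
  choose q hq hqcoeff using hspread
  obtain ⟨x, hx⟩ := exists_eval_ne_zero <| mul_ne_zero
    (mul_ne_zero (hrename hp) (hrename (Matrix.det_mvPolynomialX_ne_zero (Fin (m + d + 1)) K))) <|
    mul_ne_zero hr (Finset.prod_ne_zero_iff.2 fun c (_ : c ∈ Finset.univ) =>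
      Finset.prod_ne_zero_iff.2 fun k (_ : k ∈ Finset.univ) => hq c k)
  simp only [map_mul, map_prod, mul_ne_zero_iff, Finset.prod_ne_zero_iff, eval_rename] at hx
  obtain ⟨⟨hpx, hdet⟩, hrx, hqx⟩ := hx
  refine ⟨Matrix.of fun i j => x ((j : ℕ) + 1, i), hpx, ⟨?_, fun c hc k hk => ?_⟩, hrU x hrx⟩
  · rw [isUnit_iff_ne_zero]
    rwa [Matrix.eval_det_mvPolynomialX] at hdet
  · have := hqcoeff ⟨c, Nat.lt_succ_iff.2 hc⟩ ⟨k, Nat.lt_succ_iff.2 hk⟩ x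
      (hqx _ (Finset.mem_univ _) _ (Finset.mem_univ _))
    simpa only [spreadBy_of_notMem (Set.notMem_empty _)] using this

end Generic

section Sphere

variable {m d : ℕ} {K : Type*} [Field K] {U : Set (Multiset ℕ)} {u : Multiset ℕ}
  {M : Matrix (Fin (m + d + 1)) (Fin (m + d + 1)) K}

theorem IsSpreadGeneric.hasLeadingMonomial_ball_of_notMem (hM : IsSpreadGeneric m d M)
    (hU : ShiftClosed m U) (hu : ∀ x ∈ u, x ∈ Finset.Icc 1 m) (hcard : u.card ≤ d / 2 + 1)
    (huU : u ∉ U) : HasLeadingMonomial (imageIdeal M (ballOfMonomials m d U)) u :=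
  have hu' : u ∈ monomialsOn m u.card := mem_monomialsOn.2 ⟨hu, rfl⟩
  hU.hasLeadingMonomial_ball_of_dominating hcard hu' huU
    (hM.hasLeadingMonomial_dominating hcard hu')

theorem IsSpreadGeneric.notMem_of_hasLeadingMonomial_sphere (hM : IsSpreadGeneric m d M)
    (hU : ShiftClosed m U) (hdeg : ∀ u ∈ U, 2 * u.card ≤ d + 1)
    (hu : ∀ x ∈ u, x ∈ Finset.Icc 1 m) (hcard : u.card ≤ d / 2)
    (h : HasLeadingMonomial (imageIdeal M (complexBoundary d (ballOfMonomials m d U))) u) :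
    u ∉ U := by
  have hum : u ∈ monomialsOn m u.card := mem_monomialsOn.2 ⟨hu, rfl⟩
  have huN : u ∈ monomialsOn (m + d + 1) u.card := monomialsOn_mono (by omega) hum
  -- The ball and its boundary have the same faces of cardinality at most `d / 2`.
  have hball : HasLeadingMonomial (imageIdeal M (ballOfMonomials m d U)) u := by
    refine (h.imageSpan_of_imageIdeal hM.isUnit_det (fun F hF G hGF =>
      hF.imp fun H hH => ⟨hGF.trans hH.1, hH.2⟩) huN).mono fun f =>
        mem_imageIdeal_of_mem_imageSpan fun w hw => ?_
    obtain ⟨hwIcc, hwk⟩ := mem_monomialsOn.1 hw.1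
    exact ⟨hwIcc, fun hwB => hw.2 (mem_complexBoundary_of_card_le hU hdeg hwB
      ((Multiset.toFinset_card_le w).trans (hwk.trans_le hcard)))⟩
  have := filter_notMem_of_hasLeadingMonomial hM.isUnit_det (by omega)
    (fun v hv hvu => hM.hasLeadingMonomial_ball_of_notMem hU hv (by omega)) huN hball
  rwa [Multiset.filter_eq_self.2 (le_of_mem_monomialsOn hum)] at this

theorem ShiftClosed.spreadBy_notMem_complexBoundary (hU : ShiftClosed m U)
    (hdeg : ∀ u ∈ U, 2 * u.card ≤ d + 1) (hu : u ∈ monomialsOn m (d / 2 + 1)) :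
    (spreadBy U u).toFinset ∉ complexBoundary d (ballOfMonomials m d U) := by
  by_cases huU : u ∈ U
  · have hle := hdeg u huU
    rw [spreadBy_of_mem huU]
    refine spread_one_notMem_complexBoundary hU huU ?_
    rw [(mem_monomialsOn.1 hu).2] at hle ⊢
    omega
  · rw [spreadBy_of_notMem huU]
    exact fun h => huU (hU.mem_of_spread_zero_mem_ball (le_of_mem_monomialsOn hu)
      (complexBoundary_ballOfMonomials_subset m d U h))

theorem ShiftClosed.hasLeadingMonomial_sphere_of_lt_card (hU : ShiftClosed m U)
    (hdeg : ∀ u ∈ U, 2 * u.card ≤ d + 1)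
    (hM : CoeffIndep m (d / 2 + 1) fun u => imageMonomial M (spreadBy U u))
    (hu : ∀ x ∈ u, x ∈ Finset.Icc 1 m) (hcard : d / 2 < u.card) :
    HasLeadingMonomial (imageIdeal M (complexBoundary d (ballOfMonomials m d U))) u := by
  obtain ⟨w, hw⟩ : ∃ w, w ∈ u.powersetCard (d / 2 + 1) := Multiset.card_pos_iff_exists_mem.1 <| by
    rw [Multiset.card_powersetCard]
    exact Nat.choose_pos hcard
  obtain ⟨hwu, hwcard⟩ := Multiset.mem_powersetCard.1 hw
  have hwm : w ∈ monomialsOn m (d / 2 + 1) :=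
    mem_monomialsOn.2 ⟨fun x hx => hu x (Multiset.mem_of_le hwu hx), hwcard⟩
  have hlead := hM.hasLeadingMonomial (by omega) (fun v hv =>
    isHomogeneous_imageMonomial M (spreadBy_mem_monomialsOn U le_rfl hv)) hwm
  rw [← imageSpan_image] at hlead
  refine (hlead.mono fun f => mem_imageIdeal_of_mem_imageSpan ?_).of_le hwu
  rintro _ ⟨v, hv, rfl⟩
  exact ⟨(mem_monomialsOn.1 (spreadBy_mem_monomialsOn U le_rfl hv)).1,
    hU.spreadBy_notMem_complexBoundary hdeg hv⟩

theorem IsSpreadGeneric.hasLeadingMonomial_sphere_iff (hM : IsSpreadGeneric m d M)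
    (hMU : CoeffIndep m (d / 2 + 1) fun u => imageMonomial M (spreadBy U u))
    (hU : ShiftClosed m U) (hdeg : ∀ u ∈ U, 2 * u.card ≤ d + 1)
    (hu : ∀ x ∈ u, x ∈ Finset.Icc 1 m) :
    HasLeadingMonomial (imageIdeal M (complexBoundary d (ballOfMonomials m d U))) u ↔
      ¬(u ∈ U ∧ u.card ≤ d / 2) := by
  refine ⟨fun h hmem => hM.notMem_of_hasLeadingMonomial_sphere hU hdeg hu hmem.2 h hmem.1,
    fun h => ?_⟩
  obtain hcard | hcard := le_or_gt u.card (d / 2)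
  · exact (hM.hasLeadingMonomial_ball_of_notMem hU hu (by omega) fun huU => h ⟨huU, hcard⟩).mono
      (imageIdeal_anti (complexBoundary_ballOfMonomials_subset m d U))
  · exact hU.hasLeadingMonomial_sphere_of_lt_card hdeg hMU hu hcard

end Sphere

end SqueezedSphere

theorem stmt19_general {n d : ℕ} (hdn : d < n) {U : Set (Multiset ℕ)}
    (hU : SqueezedSphere.ShiftClosed (n - d - 1) U)
    (hdeg : ∀ u ∈ U, 2 * Multiset.card u ≤ d + 1) {K : Type*} [Field K] [Infinite K]
    {J : Ideal (MvPolynomial (Fin n) K)}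
    (hJ : IsGin (srIdeal K n (squeezedSphere n d U)) J) :
    {u : Multiset ℕ | (∀ i ∈ u, i ∈ Finset.Icc 1 (n - d - 1)) ∧
        MvPolynomial.monomial (multisetToExp n u) (1 : K) ∉ J} =
      {u ∈ U | Multiset.card u ≤ d / 2} := by
  obtain ⟨m, rfl⟩ : ∃ m, n = m + d + 1 := ⟨n - d - 1, by omega⟩
  have hm : m + d + 1 - d - 1 = m := by omega
  rw [hm] at hU ⊢
  obtain ⟨p, hp, hgin⟩ := hJ
  obtain ⟨M, hMp, hM, hMU⟩ := SqueezedSphere.exists_isSpreadGeneric hU hp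
  have hstd : ∀ u : Multiset ℕ, (∀ i ∈ u, i ∈ Finset.Icc 1 m) →
      (MvPolynomial.monomial (multisetToExp (m + d + 1) u) (1 : K) ∉ J ↔
        u ∈ U ∧ u.card ≤ d / 2) := by
    intro u hu
    rw [← hgin M hM.isUnit_det hMp, SqueezedSphere.monomial_mem_initialIdeal_iff, squeezedSphere,
      SqueezedSphere.squeezedBall_eq_ballOfMonomials hdeg]
    exact not_iff_comm.1 (hM.hasLeadingMonomial_sphere_iff hMU hU hdeg hu).symm
  exact Set.ext fun u => ⟨fun h => (hstd u h.1).1 h.2,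
    fun h => ⟨hU.mem_Icc u h.1, (hstd u (hU.mem_Icc u h.1)).2 h⟩⟩

/-- from Lemma 5.6 and the final remark. In characteristic `0`,
`U(S_d(U)) = {u ∈ U : deg u ≤ d/2}`, where
`U(Γ) = {monomials u in x_1,…,x_{n-d-1} : u ∉ Gin(I_Γ)}`. -/
theorem stmt19 (n d : ℕ) (hd : 0 < d) (hdn : d < n) (U : Set (Multiset ℕ))
    (hU : IsShiftedOrderIdeal (n - d - 1) U)
    (hdeg : ∀ u ∈ U, 2 * Multiset.card u ≤ d + 1)
    (K : Type) [Field K] (hK : CharZero K)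
    (J : Ideal (MvPolynomial (Fin n) K))
    (hJ : IsGin (srIdeal K n (squeezedSphere n d U)) J) :
    {u : Multiset ℕ | (∀ i ∈ u, i ∈ Finset.Icc 1 (n - d - 1)) ∧
        MvPolynomial.monomial (multisetToExp n u) (1 : K) ∉ J} =
      {u ∈ U | Multiset.card u ≤ d / 2} :=
  stmt19_general hdn hU.shiftClosed hdeg hJ
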